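/- Let d ≥ 1 and let Ω ⊂ ℝ^d be open. Let g be a smooth Riemannian metric in coordinates on Ω and S a smooth d×d-matrix field on Ω. Let f, v : Ω → ℝ^{d+1} be Lipschitz maps such that at almost every x ∈ Ω: df(x)ᵀ·df(x) = g(x), df(x)ᵀ·v(x) = 0, |v(x)| = 1, det( df(x) | v(x) ) > 0, and dv(x) = −df(x)·S(x). Then f and v are smooth on Ω. -/

import Mathlib

open Matrix MeasureTheory

/-- The `(d+1) × (d+1)` matrix `(F|w)` whose first `d` columns are those of the
`(d+1) × d` matrix `F` and whose last column is the vector `w`. -/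
def juxtCol {m d : ℕ} (F : Matrix (Fin m) (Fin d) ℝ) (w : Fin m → ℝ) :
    Matrix (Fin m) (Fin (d + 1)) ℝ :=
  Matrix.of fun i => Fin.snoc (F i) (w i)

/-- Euclidean norm of a vector in `ℝ^m`. -/
noncomputable def vecNorm {m : ℕ} (w : Fin m → ℝ) : ℝ :=
  Real.sqrt (∑ i, w i ^ 2)

/-- The Jacobian matrix of `f` at `x`, computed from the derivative within `Ω`
(the `(i,j)` entry is `∂_j f^i(x)`); it is the zero matrix at points of
non-differentiability. -/
noncomputable def jacOn {d m : ℕ} (Ω : Set (Fin d → ℝ)) (f : (Fin d → ℝ) → Fin m → ℝ)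
    (x : Fin d → ℝ) : Matrix (Fin m) (Fin d) ℝ :=
  Matrix.of fun i j => fderivWithin ℝ f Ω x (Pi.single j 1) i

/-!
The map `Φ (x, t) = f x + t • v x` is, near `t = 0`, an orientation preserving Lipschitz isometry
from the smooth metric `G = (1 - t S)ᵀ g (1 - t S) + dt²` to Euclidean space. Cofactors of a
Lipschitz differential are divergence free, and the cofactor matrix of an oriented isometry is
`√(det G) • DΦ * G⁻¹`, so `Φ` is a weak solution of a linear elliptic system with smooth
coefficients. Caccioppoli's inequality bounds the difference quotients of `DΦ` in `L²`, hence `DΦ`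
has weak derivatives in `L²`. Differentiating `⟪DΦ a, DΦ b⟫ = G a b`, Koszul's formula gives
`D (DΦ) = DΦ ∘ Γ` with the Christoffel symbols `Γ` of `G`. The right-hand side is bounded, so `DΦ`
is Lipschitz, and the equation bootstraps to smoothness of `Φ`. Finally `f = Φ (·, 0)` and
`v = ∂ₜ Φ (·, 0)`.
-/

open Filter Topology Set Metric
open scoped NNReal Convolution ContDiff RealInnerProductSpace

set_option maxSynthPendingDepth 3

section DiffQuot

variable {V A : Type*} [NormedAddCommGroup V] [NormedSpace ℝ V]
  [NormedAddCommGroup A] [NormedSpace ℝ A]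

/-- The difference quotient of `f` in the direction `v` with step `t`; it is `0` for `t = 0`. -/
noncomputable def diffQuot (v : V) (t : ℝ) (f : V → A) (x : V) : A := t⁻¹ • (f (x + t • v) - f x)

theorem norm_diffQuot_le_of_lipschitzWith {C : ℝ≥0} {f : V → A} (hf : LipschitzWith C f)
    (v : V) (t : ℝ) (x : V) : ‖diffQuot v t f x‖ ≤ C * ‖v‖ := by
  rcases eq_or_ne t 0 with rfl | ht
  · simpa [diffQuot] using mul_nonneg C.coe_nonneg (norm_nonneg v)
  rw [diffQuot, norm_smul, norm_inv, inv_mul_le_iff₀ (norm_pos_iff.2 ht)]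
  calc ‖f (x + t • v) - f x‖ ≤ C * ‖x + t • v - x‖ := hf.norm_sub_le _ _
    _ = ‖t‖ * (C * ‖v‖) := by rw [add_sub_cancel_left, norm_smul]; ring

theorem continuous_diffQuot {f : V → A} (hf : Continuous f) (v : V) (t : ℝ) :
    Continuous (diffQuot v t f) := by
  unfold diffQuot
  fun_prop

theorem tendsto_diffQuot {f : V → A} {x : V} (hf : DifferentiableAt ℝ f x) (v : V) :
    Tendsto (fun t ↦ diffQuot v t f x) (𝓝[≠] 0) (𝓝 (fderiv ℝ f x v)) :=
  hasLineDerivAt_iff_tendsto_slope_zero.1 (hf.hasFDerivAt.hasLineDerivAt v)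

theorem inner_diffQuot {W : Type*} [NormedAddCommGroup W] [InnerProductSpace ℝ W]
    (a b : V → W) (v : V) (t : ℝ) (x : V) :
    diffQuot v t (fun y ↦ ⟪a y, b y⟫) x = ⟪diffQuot v t a x, b x⟫ + ⟪diffQuot v t b x, a x⟫ +
      t * ⟪diffQuot v t a x, diffQuot v t b x⟫ := by
  rcases eq_or_ne t 0 with rfl | ht
  · simp [diffQuot]
  simp only [diffQuot, real_inner_smul_left, real_inner_smul_right, inner_sub_left,
    inner_sub_right, smul_eq_mul, real_inner_comm (a x)]
  field_simp
  ring

theorem fderiv_comp_const_sub_apply {f : V → A} (hf : Differentiable ℝ f) (a x v : V) :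
    fderiv ℝ (fun y ↦ f (a - y)) x v = -fderiv ℝ f (a - x) v := by
  have h : HasFDerivAt (fun y ↦ f (a - y)) _ x :=
    (hf (a - x)).hasFDerivAt.comp x ((hasFDerivAt_id x).const_sub a)
  simp [h.fderiv]

theorem fderiv_fderiv_apply_comm {f : V → A} (hf : ContDiff ℝ 2 f) (v w x : V) :
    fderiv ℝ (fun y ↦ fderiv ℝ f y v) x w = fderiv ℝ (fun y ↦ fderiv ℝ f y w) x v := by
  have hd : DifferentiableAt ℝ (fderiv ℝ f) x :=
    (hf.fderiv_right (m := 1) le_rfl).differentiable one_ne_zero x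
  rw [fderiv_clm_apply hd (differentiableAt_const v),
    fderiv_clm_apply hd (differentiableAt_const w)]
  simpa using hf.contDiffAt.isSymmSndFDerivAt (by simp) w v

end DiffQuot

section Integrability

theorem integrable_of_norm_le_of_eq_zero_off_compact {V A : Type*} [TopologicalSpace V]
    [MeasurableSpace V] {μ : Measure V} [IsFiniteMeasureOnCompacts μ] [NormedAddCommGroup A]
    {g : V → A} (hg : AEStronglyMeasurable g μ) {M : ℝ} (hM : ∀ x, ‖g x‖ ≤ M)
    {K : Set V} (hK : IsCompact K) (hgK : ∀ x ∉ K, g x = 0) : Integrable g μ :=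
  IntegrableOn.integrable_of_forall_notMem_eq_zero
    (Measure.integrableOn_of_bounded hK.measure_lt_top.ne hg (.of_forall hM)) hgK

theorem locallyIntegrable_of_norm_le {V A : Type*} [TopologicalSpace V] [MeasurableSpace V]
    {μ : Measure V} [IsLocallyFiniteMeasure μ] [NormedAddCommGroup A] {g : V → A}
    (hg : AEStronglyMeasurable g μ) {M : ℝ} (hM : ∀ x, ‖g x‖ ≤ M) : LocallyIntegrable g μ :=
  (memLp_top_of_bound hg M (.of_forall hM)).locallyIntegrable le_top

theorem aestronglyMeasurable_fderiv {V A : Type*} [NormedAddCommGroup V] [NormedSpace ℝ V]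
    [FiniteDimensional ℝ V] [MeasurableSpace V] [BorelSpace V] (μ : Measure V)
    [NormedAddCommGroup A] [NormedSpace ℝ A] [FiniteDimensional ℝ A] (f : V → A) :
    AEStronglyMeasurable (fderiv ℝ f) μ := by
  borelize (V →L[ℝ] A)
  exact (measurable_fderiv ℝ f).aestronglyMeasurable

theorem locallyIntegrableOn_bilin {V A A' Y : Type*} [TopologicalSpace V] [MeasurableSpace V]
    {μ : Measure V} {U : Set V} [NormedAddCommGroup A] [NormedSpace ℝ A]
    [NormedAddCommGroup A'] [NormedSpace ℝ A'] [NormedAddCommGroup Y] [NormedSpace ℝ Y]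
    (B : A →L[ℝ] A' →L[ℝ] Y) {u : V → A} {w : V → A'} (hu : MemLp u ⊤ μ)
    (hw : LocallyIntegrableOn w U μ) : LocallyIntegrableOn (fun x ↦ B (u x) (w x)) U μ :=
  fun x hx ↦ let ⟨s, hs, hint⟩ := hw x hx
    ⟨s, hs, memLp_one_iff_integrable.1
      (B.memLp_of_bilin 1 (hu.restrict s) (memLp_one_iff_integrable.2 hint))⟩

theorem memLp_top_fderiv {V A : Type*} [NormedAddCommGroup V] [NormedSpace ℝ V]
    [FiniteDimensional ℝ V] [MeasurableSpace V] [BorelSpace V] [NormedAddCommGroup A]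
    [NormedSpace ℝ A] [FiniteDimensional ℝ A] {C : ℝ≥0} {f : V → A} (hf : LipschitzWith C f)
    (μ : Measure V) : MemLp (fderiv ℝ f) ⊤ μ :=
  memLp_top_of_bound (aestronglyMeasurable_fderiv μ f) C
    (.of_forall fun _ ↦ norm_fderiv_le_of_lipschitz ℝ hf)

theorem memLp_top_fderiv_apply {V A : Type*} [NormedAddCommGroup V] [NormedSpace ℝ V]
    [FiniteDimensional ℝ V] [MeasurableSpace V] [BorelSpace V] [NormedAddCommGroup A]
    [NormedSpace ℝ A] [FiniteDimensional ℝ A] {C : ℝ≥0} {f : V → A} (hf : LipschitzWith C f)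
    (μ : Measure V) (v : V) : MemLp (fun x ↦ fderiv ℝ f x v) ⊤ μ :=
  memLp_top_of_bound ((aestronglyMeasurable_fderiv μ f).apply_continuousLinearMap v) (C * ‖v‖)
    (.of_forall fun x ↦ (fderiv ℝ f x).le_of_opNorm_le (norm_fderiv_le_of_lipschitz ℝ hf) v)

end Integrability

section DiffQuotIntegral

variable {V A A' Y : Type*} [NormedAddCommGroup V] [NormedSpace ℝ V] [FiniteDimensional ℝ V]
  [MeasurableSpace V] [BorelSpace V] {μ : Measure V} [μ.IsAddHaarMeasure]
  [NormedAddCommGroup A] [NormedSpace ℝ A] [NormedAddCommGroup A'] [NormedSpace ℝ A']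
  [NormedAddCommGroup Y] [NormedSpace ℝ Y]

-- The integrals are difference quotients at `0` of the convolution of `u` with `ψ (-·)`.
theorem tendsto_integral_bilin_diffQuot_of_contDiff (B : A →L[ℝ] A' →L[ℝ] Y)
    {u : V → A} (hu : LocallyIntegrable u μ) {ψ : V → A'} (hψ : ContDiff ℝ 1 ψ)
    (hψc : HasCompactSupport ψ) (v : V) :
    Tendsto (fun t : ℝ ↦ ∫ x, B (diffQuot v t u x) (ψ x) ∂μ) (𝓝[≠] 0)
      (𝓝 (-∫ x, B (u x) (fderiv ℝ ψ x v) ∂μ)) := by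
  have hψn : ContDiff ℝ 1 (fun y ↦ ψ (-y)) := hψ.comp contDiff_neg
  have hψnc : HasCompactSupport (fun y ↦ ψ (-y)) := hψc.comp_homeomorph (Homeomorph.neg V)
  have hint (s : V) : Integrable (fun x ↦ B (u x) (ψ (x - s))) μ := by
    simpa [ConvolutionExistsAt] using hψnc.convolutionExists_right B hu hψn.continuous s
  have hshift (s x : V) : B (u (x + s)) (ψ x) = B (u (x + s)) (ψ (x + s - s)) := by simp
  have hd : HasFDerivAt (u ⋆[B, μ] fun y ↦ ψ (-y)) _ (0 : V) :=
    hψnc.hasFDerivAt_convolution_right B hu hψn 0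
  have hslope := hasLineDerivAt_iff_tendsto_slope_zero.1 (hd.hasLineDerivAt v)
  have hchain (x : V) : fderiv ℝ (fun y ↦ ψ (-y)) (-x) v = -fderiv ℝ ψ x v := by
    simpa using fderiv_comp_const_sub_apply (hψ.differentiable one_ne_zero) 0 (-x) v
  rw [convolution_precompR_apply B hu (hψnc.fderiv ℝ) (hψn.continuous_fderiv one_ne_zero)]
    at hslope
  simp only [convolution_def, hchain, map_neg, integral_neg, zero_add, zero_sub, neg_sub, neg_neg]
    at hslope
  refine hslope.congr fun t ↦ ?_
  simp only [diffQuot, map_smul, map_sub, _root_.smul_apply, _root_.sub_apply]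
  rw [integral_smul, integral_sub]
  · simp_rw [hshift, integral_add_right_eq_self fun y ↦ B (u y) (ψ (y - t • v))]
  · simp_rw [hshift]
    exact (hint (t • v)).comp_add_right (t • v)
  · simpa using hint 0

variable [FiniteDimensional ℝ A] {C : ℝ≥0} {f : V → A}

theorem tendsto_integral_bilin_diffQuot_of_lipschitzWith (B : A →L[ℝ] A' →L[ℝ] Y)
    (hf : LipschitzWith C f) {g : V → A'} (hg : Integrable g μ) (v : V) :
    Tendsto (fun t : ℝ ↦ ∫ x, B (diffQuot v t f x) (g x) ∂μ) (𝓝[≠] 0)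
      (𝓝 (∫ x, B (fderiv ℝ f x v) (g x) ∂μ)) := by
  refine tendsto_integral_filter_of_dominated_convergence (fun x ↦ ‖B‖ * (C * ‖v‖) * ‖g x‖)
    (.of_forall fun t ↦ ?_) (.of_forall fun t ↦ .of_forall fun x ↦ ?_) (hg.norm.const_mul _) ?_
  · exact B.aestronglyMeasurable_comp₂ (continuous_diffQuot hf.continuous v t).aestronglyMeasurable
      hg.aestronglyMeasurable
  · grw [B.le_opNorm₂, norm_diffQuot_le_of_lipschitzWith hf]
  · filter_upwards [hf.ae_differentiableAt (μ := μ)] with x hx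
    exact ((B.flip (g x)).continuous.tendsto _).comp (tendsto_diffQuot hx v)

theorem integral_bilin_fderiv_of_lipschitzWith (B : A →L[ℝ] A' →L[ℝ] Y)
    (hf : LipschitzWith C f) {ψ : V → A'} (hψ : ContDiff ℝ 1 ψ) (hψc : HasCompactSupport ψ)
    (v : V) : ∫ x, B (fderiv ℝ f x v) (ψ x) ∂μ = -∫ x, B (f x) (fderiv ℝ ψ x v) ∂μ :=
  tendsto_nhds_unique
    (tendsto_integral_bilin_diffQuot_of_lipschitzWith B hf
      (hψ.continuous.integrable_of_hasCompactSupport hψc) v)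
    (tendsto_integral_bilin_diffQuot_of_contDiff B hf.continuous.locallyIntegrable hψ hψc v)

end DiffQuotIntegral

section Mollification

variable {V A : Type*} [NormedAddCommGroup V] [NormedSpace ℝ V] [FiniteDimensional ℝ V]

theorem exists_contDiffBump_seq (V : Type*) [NormedAddCommGroup V] :
    ∃ φ : ℕ → ContDiffBump (0 : V),
    Tendsto (fun n ↦ (φ n).rOut) atTop (𝓝 0) ∧ (∀ n, (φ n).rOut ≤ 2 * (φ n).rIn) ∧
    ∀ n, (φ n).rOut ≤ 2 := by
  have hpos (n : ℕ) : 0 < 1 / (n + 1 : ℝ) := by positivity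
  refine ⟨fun n ↦ ⟨1 / (n + 1), 2 * (1 / (n + 1)), hpos n, by linarith [hpos n]⟩, ?_,
    fun n ↦ le_rfl, fun n ↦ ?_⟩
  · simpa using (tendsto_one_div_add_atTop_nhds_zero_nat (𝕜 := ℝ)).const_mul 2
  · have : 1 / (n + 1 : ℝ) ≤ 1 := (div_le_one (by positivity)).2 (by simp)
    linarith

variable [MeasurableSpace V] [BorelSpace V] {μ : Measure V} [NormedAddCommGroup A]
  [NormedSpace ℝ A]

/-- The mollification of `u`: its convolution with the normalization of the bump function `φ`. -/
noncomputable abbrev mollify (μ : Measure V) (φ : ContDiffBump (0 : V)) (u : V → A) : V → A :=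
  φ.normed μ ⋆[ContinuousLinearMap.lsmul ℝ ℝ, μ] u

variable [μ.IsAddHaarMeasure] (φ : ContDiffBump (0 : V)) {u : V → A}

theorem norm_mollify_sub_le [CompleteSpace A] (hu : AEStronglyMeasurable u μ) {x : V} {a : A}
    {M : ℝ} (hM : ∀ y ∈ ball x φ.rOut, ‖u y - a‖ ≤ M) : ‖mollify μ φ u x - a‖ ≤ M := by
  have hM0 : 0 ≤ M := (norm_nonneg _).trans (hM x (mem_ball_self φ.rOut_pos))
  simp_rw [← dist_eq_norm] at hM ⊢
  exact dist_convolution_le hM0 φ.support_normed_eq.subset φ.nonneg_normed φ.integral_normed hu hM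

theorem contDiff_mollify (hu : LocallyIntegrable u μ) (n : ℕ∞) :
    ContDiff ℝ n (mollify μ φ u) :=
  φ.hasCompactSupport_normed.contDiff_convolution_left _ φ.contDiff_normed hu

end Mollification

section WeakDerivative

variable {V A : Type*} [NormedAddCommGroup V] [NormedSpace ℝ V] [MeasurableSpace V]
  {μ : Measure V} [NormedAddCommGroup A] [NormedSpace ℝ A]

/-- `P` is the weak (distributional) derivative of `u` on `U`, tested against smooth scalar
functions with compact support in `U`. -/
def HasWeakFDerivOn (μ : Measure V) (u : V → A) (P : V → V →L[ℝ] A) (U : Set V) : Prop :=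
  ∀ ψ : V → ℝ, ContDiff ℝ ∞ ψ → HasCompactSupport ψ → tsupport ψ ⊆ U → ∀ v,
    ∫ x, fderiv ℝ ψ x v • u x ∂μ = -∫ x, ψ x • P x v ∂μ

namespace HasWeakFDerivOn

variable {u u' : V → A} {P P' : V → V →L[ℝ] A} {U U' : Set V}

theorem mono (h : HasWeakFDerivOn μ u P U) (hU : U' ⊆ U) : HasWeakFDerivOn μ u P U' :=
  fun ψ hψ hψc hψU ↦ h ψ hψ hψc (hψU.trans hU)

theorem congr_ae (h : HasWeakFDerivOn μ u P U) (hu : ∀ᵐ x ∂μ, x ∈ U → u x = u' x)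
    (hP : ∀ᵐ x ∂μ, x ∈ U → P x = P' x) : HasWeakFDerivOn μ u' P' U := by
  intro ψ hψ hψc hψU v
  have hl : ∫ x, fderiv ℝ ψ x v • u x ∂μ = ∫ x, fderiv ℝ ψ x v • u' x ∂μ := by
    refine integral_congr_ae ?_
    filter_upwards [hu] with x hx
    by_cases hxU : x ∈ U
    · simp [hx hxU]
    · simp [fderiv_of_notMem_tsupport ℝ fun h ↦ hxU (hψU h)]
  have hr : ∫ x, ψ x • P x v ∂μ = ∫ x, ψ x • P' x v ∂μ := by
    refine integral_congr_ae ?_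
    filter_upwards [hP] with x hx
    by_cases hxU : x ∈ U
    · simp [hx hxU]
    · simp [image_eq_zero_of_notMem_tsupport fun h ↦ hxU (hψU h)]
  rw [← hl, ← hr, h ψ hψ hψc hψU v]

variable [FiniteDimensional ℝ V] [BorelSpace V] [μ.IsAddHaarMeasure]

theorem fderiv_of_lipschitzWith [FiniteDimensional ℝ A] {C : ℝ≥0} {f : V → A}
    (hf : LipschitzWith C f) (U : Set V) : HasWeakFDerivOn μ f (fderiv ℝ f) U := by
  intro ψ hψ hψc _ v
  rw [eq_neg_iff_add_eq_zero, add_comm, ← eq_neg_iff_add_eq_zero]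
  exact integral_bilin_fderiv_of_lipschitzWith (ContinuousLinearMap.lsmul ℝ ℝ).flip hf
    (hψ.of_le (by simp)) hψc v

theorem hasFDerivAt_mollify (h : HasWeakFDerivOn μ u P U) (hu : LocallyIntegrable u μ)
    (hP : LocallyIntegrable P μ) (φ : ContDiffBump (0 : V)) {x : V}
    (hx : closedBall x φ.rOut ⊆ U) : HasFDerivAt (mollify μ φ u) (mollify μ φ P x) x := by
  have hφ : ContDiff ℝ 1 (φ.normed μ) := φ.contDiff_normed
  have hφc := φ.hasCompactSupport_normed (μ := μ)
  have hρ : ContDiff ℝ ∞ fun y ↦ φ.normed μ (x - y) :=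
    φ.contDiff_normed.comp (contDiff_const.sub contDiff_id)
  have hρc : HasCompactSupport fun y ↦ φ.normed μ (x - y) :=
    hφc.comp_homeomorph (Homeomorph.subLeft x)
  have hρU : tsupport (fun y ↦ φ.normed μ (x - y)) ⊆ U := by
    refine subset_trans (fun y hy ↦ ?_) hx
    have := tsupport_comp_subset_preimage (φ.normed μ) (f := fun y ↦ x - y) (by fun_prop) hy
    simpa [φ.tsupport_normed_eq, dist_eq_norm, norm_sub_rev y x] using this
  convert hφc.hasFDerivAt_convolution_left (ContinuousLinearMap.lsmul ℝ ℝ) hφ hu x using 1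
  ext v
  have hintP : Integrable (fun y ↦ φ.normed μ (x - y) • P y) μ := by
    have h := hφc.convolutionExists_left (ContinuousLinearMap.lsmul ℝ ℝ) hφ.continuous hP x
    simpa using h.integrable_swap
  have hintu := (hφc.fderiv ℝ).convolutionExists_left
    (ContinuousLinearMap.precompL V (ContinuousLinearMap.lsmul ℝ ℝ))
    (hφ.continuous_fderiv one_ne_zero) hu x
  have hweak := h _ hρ hρc hρU v
  simp only [fderiv_comp_const_sub_apply (hφ.differentiable one_ne_zero), neg_smul, integral_neg,
    neg_inj] at hweak
  rw [mollify, convolution_eq_swap, convolution_eq_swap,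
    ContinuousLinearMap.integral_apply hintu.integrable_swap]
  simpa [ContinuousLinearMap.integral_apply hintP, ContinuousLinearMap.precompL_apply]
    using hweak.symm

variable [CompleteSpace A] {x₀ : V} {s : ℝ} {φ : ℕ → ContDiffBump (0 : V)}

theorem norm_sub_sub_le (h : HasWeakFDerivOn μ u P (ball x₀ s)) (hu : LocallyIntegrable u μ)
    (hP : LocallyIntegrable P μ) {L : V →L[ℝ] A} {M : ℝ} (hM : ∀ y ∈ ball x₀ s, ‖P y - L‖ ≤ M)
    (hφ : Tendsto (fun n ↦ (φ n).rOut) atTop (𝓝 0)) {x y : V} (hx : x ∈ ball x₀ s)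
    (hy : y ∈ ball x₀ s) (hux : Tendsto (fun n ↦ mollify μ (φ n) u x) atTop (𝓝 (u x)))
    (huy : Tendsto (fun n ↦ mollify μ (φ n) u y) atTop (𝓝 (u y))) :
    ‖u y - u x - L (y - x)‖ ≤ M * ‖y - x‖ := by
  obtain ⟨r, hr, hrs⟩ := exists_between (max_lt (mem_ball.1 hx) (mem_ball.1 hy))
  refine le_of_tendsto ((huy.sub hux).sub_const _).norm ?_
  filter_upwards [hφ.eventually (gt_mem_nhds (sub_pos.2 hrs))] with n hn
  have hsub {z : V} (hz : z ∈ ball x₀ r) : closedBall z (φ n).rOut ⊆ ball x₀ s :=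
    closedBall_subset_ball' (by linarith [mem_ball.1 hz])
  refine (convex_ball x₀ r).norm_image_sub_le_of_norm_hasFDerivWithin_le'
    (fun z hz ↦ (h.hasFDerivAt_mollify hu hP (φ n) (hsub hz)).hasFDerivWithinAt)
    (fun z hz ↦ norm_mollify_sub_le (φ n) hP.aestronglyMeasurable fun w hw ↦
      hM w (hsub hz (ball_subset_closedBall hw)))
    (mem_ball.2 ((le_max_left _ _).trans_lt hr)) (mem_ball.2 ((le_max_right _ _).trans_lt hr))

theorem exists_lipschitzWith_ae_eq [FiniteDimensional ℝ A]
    (h : HasWeakFDerivOn μ u P (ball x₀ s)) (hu : LocallyIntegrable u μ)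
    (hPm : AEStronglyMeasurable P μ) {M : ℝ} (hM : ∀ x, ‖P x‖ ≤ M) :
    ∃ (C : ℝ≥0) (w : V → A), LipschitzWith C w ∧ ∀ᵐ x ∂μ, x ∈ ball x₀ s → u x = w x := by
  obtain ⟨φ, hφ, hφ2, -⟩ := exists_contDiffBump_seq V
  let T : Set V := {x | x ∈ ball x₀ s ∧ Tendsto (fun n ↦ mollify μ (φ n) u x) atTop (𝓝 (u x))}
  have hT : LipschitzOnWith M.toNNReal u T := by
    refine LipschitzOnWith.of_dist_le_mul fun x hx y hy ↦ ?_
    have := h.norm_sub_sub_le hu (locallyIntegrable_of_norm_le hPm hM) (L := 0)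
      (fun z _ ↦ by simpa using hM z) hφ hy.1 hx.1 hy.2 hx.2
    simpa [dist_eq_norm, (norm_nonneg _).trans (hM x₀)] using this
  obtain ⟨w, hw, huw⟩ := hT.extend_finite_dimension
  refine ⟨_, w, hw, ?_⟩
  filter_upwards [ContDiffBump.ae_convolution_tendsto_right_of_locallyIntegrable hφ
    (.of_forall hφ2) hu] with x hx hxs
  exact huw ⟨hxs, hx⟩

theorem hasFDerivAt (h : HasWeakFDerivOn μ u P U) (hU : IsOpen U) (hu : Continuous u)
    (hP : LocallyIntegrable P μ) {x : V} (hx : x ∈ U) (hPx : ContinuousAt P x) :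
    HasFDerivAt u (P x) x := by
  obtain ⟨φ, hφ, -, -⟩ := exists_contDiffBump_seq V
  refine .of_isLittleO (Asymptotics.isLittleO_iff.2 fun ε hε ↦ ?_)
  obtain ⟨s, hs, hsub⟩ := Metric.mem_nhds_iff.1
    (inter_mem (hU.mem_nhds hx) (hPx.preimage_mem_nhds (ball_mem_nhds (P x) hε)))
  filter_upwards [ball_mem_nhds x hs] with y hy
  exact (h.mono fun z hz ↦ (hsub hz).1).norm_sub_sub_le hu.locallyIntegrable hP
    (fun z hz ↦ (mem_ball_iff_norm.1 (hsub hz).2).le) hφ (mem_ball_self hs) hy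
    (ContDiffBump.convolution_tendsto_right_of_continuous hφ hu x)
    (ContDiffBump.convolution_tendsto_right_of_continuous hφ hu y)

theorem contDiffOn_of_bootstrap (h : HasWeakFDerivOn μ u P U) (hU : IsOpen U) (hu : Continuous u)
    (hP : LocallyIntegrable P μ)
    (hboot : ∀ n : ℕ, ContDiffOn ℝ n u U → ContDiffOn ℝ n P U) : ContDiffOn ℝ ∞ u U := by
  have hP0 : ContinuousOn P U := (hboot 0 (contDiffOn_zero.2 hu.continuousOn)).continuousOn
  have hd {x : V} (hx : x ∈ U) : HasFDerivAt u (P x) x :=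
    h.hasFDerivAt hU hu hP hx (hP0.continuousAt (hU.mem_nhds hx))
  refine contDiffOn_infty.2 fun n ↦ ?_
  induction n with
  | zero => exact contDiffOn_zero.2 hu.continuousOn
  | succ n ih =>
    rw [Nat.cast_add_one, contDiffOn_succ_iff_fderiv_of_isOpen hU]
    refine ⟨fun x hx ↦ (hd hx).differentiableAt.differentiableWithinAt, by simp, ?_⟩
    exact (hboot n ih).congr fun x hx ↦ (hd hx).fderiv

end HasWeakFDerivOn

end WeakDerivative

section MollifyLipschitz

variable {V W W' Y : Type*} [NormedAddCommGroup V] [NormedSpace ℝ V] [FiniteDimensional ℝ V]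
  [MeasurableSpace V] [BorelSpace V] {μ : Measure V} [μ.IsAddHaarMeasure]
  [NormedAddCommGroup W] [NormedSpace ℝ W] [FiniteDimensional ℝ W]
  [NormedAddCommGroup W'] [NormedSpace ℝ W'] [FiniteDimensional ℝ W']
  [NormedAddCommGroup Y] [NormedSpace ℝ Y]

theorem fderiv_mollify {C : ℝ≥0} {f : V → W} (hf : LipschitzWith C f) (φ : ContDiffBump (0 : V)) :
    fderiv ℝ (mollify μ φ f) = mollify μ φ (fderiv ℝ f) := by
  have hD := locallyIntegrable_of_norm_le (aestronglyMeasurable_fderiv μ f)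
    fun _ ↦ norm_fderiv_le_of_lipschitz ℝ hf
  exact funext fun x ↦ ((HasWeakFDerivOn.fderiv_of_lipschitzWith hf univ).hasFDerivAt_mollify
    hf.continuous.locallyIntegrable hD φ (subset_univ _)).fderiv

theorem norm_fderiv_mollify_le {C : ℝ≥0} {f : V → W} (hf : LipschitzWith C f)
    (φ : ContDiffBump (0 : V)) (x : V) : ‖fderiv ℝ (mollify μ φ f) x‖ ≤ C := by
  rw [fderiv_mollify hf]
  simpa using norm_mollify_sub_le φ (aestronglyMeasurable_fderiv μ f) (a := 0)
    fun y _ ↦ by simpa using norm_fderiv_le_of_lipschitz ℝ hf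

theorem fderiv_mollify_of_notMem_cthickening {C : ℝ≥0} {f : V → W} (hf : LipschitzWith C f)
    (φ : ContDiffBump (0 : V)) {r : ℝ} (hr : φ.rOut ≤ r) {x : V}
    (hx : x ∉ cthickening r (tsupport f)) : fderiv ℝ (mollify μ φ f) x = 0 := by
  rw [fderiv_mollify hf, ← norm_le_zero_iff, ← sub_zero (mollify μ φ (fderiv ℝ f) x)]
  refine norm_mollify_sub_le φ (aestronglyMeasurable_fderiv μ f) fun y hy ↦ ?_
  have hy' : y ∉ tsupport f := fun h ↦ hx <|
    mem_cthickening_of_dist_le x y r _ h ((mem_ball'.1 hy).le.trans hr)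
  simp [fderiv_of_notMem_tsupport ℝ hy']

theorem tendsto_integral_fderiv_mollify {Λ : (V →L[ℝ] W) × (V →L[ℝ] W') → Y} (hΛ : Continuous Λ)
    (hΛ0 : ∀ T, Λ (T, 0) = 0) {C D : ℝ≥0} {f : V → W} {φ : V → W'} (hf : LipschitzWith C f)
    (hφ : LipschitzWith D φ) (hφc : HasCompactSupport φ) {ρ : ℕ → ContDiffBump (0 : V)}
    (hρ : Tendsto (fun n ↦ (ρ n).rOut) atTop (𝓝 0)) (hρi : ∀ n, (ρ n).rOut ≤ 2 * (ρ n).rIn)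
    {r : ℝ} (hρr : ∀ n, (ρ n).rOut ≤ r) :
    Tendsto
      (fun n ↦ ∫ x, Λ (fderiv ℝ (mollify μ (ρ n) f) x, fderiv ℝ (mollify μ (ρ n) φ) x) ∂μ) atTop
      (𝓝 (∫ x, Λ (fderiv ℝ f x, fderiv ℝ φ x) ∂μ)) := by
  obtain ⟨M, hM⟩ := ((isCompact_closedBall (0 : V →L[ℝ] W) C).prod
    (isCompact_closedBall (0 : V →L[ℝ] W') D)).exists_bound_of_continuousOn hΛ.continuousOn
  have hK : IsCompact (cthickening r (tsupport φ)) := hφc.isCompact.cthickening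
  have hDf := locallyIntegrable_of_norm_le (aestronglyMeasurable_fderiv μ f)
    fun _ ↦ norm_fderiv_le_of_lipschitz ℝ hf
  have hDφ := locallyIntegrable_of_norm_le (aestronglyMeasurable_fderiv μ φ)
    fun _ ↦ norm_fderiv_le_of_lipschitz ℝ hφ
  refine tendsto_integral_of_dominated_convergence
    ((cthickening r (tsupport φ)).indicator fun _ ↦ M) (fun n ↦ ?_)
    ((integrable_indicator_iff hK.measurableSet).2 (integrableOn_const hK.measure_lt_top.ne))
    (fun n ↦ .of_forall fun x ↦ ?_) ?_
  · exact hΛ.comp_aestronglyMeasurable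
      ((aestronglyMeasurable_fderiv μ _).prodMk (aestronglyMeasurable_fderiv μ _))
  · by_cases hx : x ∈ cthickening r (tsupport φ)
    · rw [indicator_of_mem hx]
      exact hM _ ⟨by simpa using norm_fderiv_mollify_le hf (ρ n) x,
        by simpa using norm_fderiv_mollify_le hφ (ρ n) x⟩
    · rw [indicator_of_notMem hx, fderiv_mollify_of_notMem_cthickening hφ (ρ n) (hρr n) hx, hΛ0,
        norm_zero]
  · filter_upwards [ContDiffBump.ae_convolution_tendsto_right_of_locallyIntegrable hρ
      (.of_forall hρi) hDf, ContDiffBump.ae_convolution_tendsto_right_of_locallyIntegrable hρ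
      (.of_forall hρi) hDφ] with x hfx hφx
    simp_rw [fderiv_mollify hf, fderiv_mollify hφ]
    exact (hΛ.tendsto _).comp (hfx.prodMk_nhds hφx)

end MollifyLipschitz

section Piola

variable {V W ι : Type*} [NormedAddCommGroup V] [NormedSpace ℝ V]
  [NormedAddCommGroup W] [NormedSpace ℝ W] [Fintype ι] [DecidableEq ι]

theorem sum_sum_alternating_update_update_eq_zero (η : W [⋀^ι]→L[ℝ] ℝ) (m : ι → W) (a : W)
    {H : ι → ι → W} (hH : ∀ i k, H i k = H k i) :
    ∑ i, ∑ k ∈ Finset.univ.erase i,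
      η (Function.update (Function.update m i a) k (H i k)) = 0 := by
  rw [Finset.sum_sigma']
  refine Finset.sum_involution (fun p _ ↦ ⟨p.2, p.1⟩) (fun ⟨i, k⟩ hp ↦ ?_) (fun ⟨i, k⟩ hp _ ↦ ?_)
    (fun ⟨i, k⟩ hp ↦ ?_) (fun _ _ ↦ rfl)
  all_goals have hik : k ≠ i := by simpa using hp
  · have hswap : Function.update (Function.update m k a) i (H k i) =
        Function.update (Function.update m i a) k (H i k) ∘ Equiv.swap i k := by
      ext j
      rcases eq_or_ne j k with rfl | hjk
      · simp [hik, hik.symm]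
      rcases eq_or_ne j i with rfl | hji
      · simp [hH]
      · simp [Equiv.swap_apply_of_ne_of_ne hji hjk, hji, hjk]
    rw [hswap, add_eq_zero_iff_eq_neg']
    exact η.toAlternatingMap.map_swap _ hik.symm
  · simp [hik, hik.symm]
  · simp [hik.symm]

/-- The pairing of `S` with the cofactors of `T` with respect to the alternating form `η` and the
family `b`: the derivative of `T ↦ η (T ∘ b)` in the direction `S`. -/
def cofactorPairing (η : W [⋀^ι]→L[ℝ] ℝ) (b : ι → V) (T S : V →L[ℝ] W) : ℝ :=
  ∑ i, η (Function.update (fun j ↦ T (b j)) i (S (b i)))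

theorem continuous_cofactorPairing (η : W [⋀^ι]→L[ℝ] ℝ) (b : ι → V) :
    Continuous fun p : (V →L[ℝ] W) × (V →L[ℝ] W) ↦ cofactorPairing η b p.1 p.2 := by
  refine continuous_finsetSum _ fun i _ ↦ η.cont.comp (Continuous.update ?_ i ?_) <;> fun_prop

theorem cofactorPairing_zero (η : W [⋀^ι]→L[ℝ] ℝ) (b : ι → V) (T : V →L[ℝ] W) :
    cofactorPairing η b T 0 = 0 :=
  Finset.sum_eq_zero fun i _ ↦ η.map_coord_zero i (by simp)

theorem fderiv_alternating_update_apply (η : W [⋀^ι]→L[ℝ] ℝ) {m : ι → V → W} {φ : V → W} {x : V}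
    (hm : ∀ j, DifferentiableAt ℝ (m j) x) (hφ : DifferentiableAt ℝ φ x) (i : ι) (v : V) :
    fderiv ℝ (fun y ↦ η (Function.update (fun j ↦ m j y) i (φ y))) x v =
      η (Function.update (fun j ↦ m j x) i (fderiv ℝ φ x v)) +
        ∑ k ∈ Finset.univ.erase i, η (Function.update
          (Function.update (fun j ↦ m j x) i (φ x)) k (fderiv ℝ (m k) x v)) := by
  have hupd : HasFDerivAt (fun y ↦ Function.update (fun j ↦ m j y) i (φ y))
      (ContinuousLinearMap.pi (Function.update (fun j ↦ fderiv ℝ (m j) x) i (fderiv ℝ φ x))) x := by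
    refine hasFDerivAt_pi.2 fun k ↦ ?_
    rcases eq_or_ne k i with rfl | hki
    · simpa using hφ.hasFDerivAt
    · simpa [hki] using (hm k).hasFDerivAt
  have h : HasFDerivAt (fun y ↦ η (Function.update (fun j ↦ m j y) i (φ y))) _ x :=
    (η.toContinuousMultilinearMap.hasFDerivAt _).comp x hupd
  rw [h.fderiv, ContinuousLinearMap.comp_apply, ContinuousMultilinearMap.linearDeriv_apply,
    ← Finset.add_sum_erase _ _ (Finset.mem_univ i)]
  congr 1
  · simp
  · exact Finset.sum_congr rfl fun k hk ↦ by simp [Finset.ne_of_mem_erase hk]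

variable [MeasurableSpace V] [BorelSpace V] [FiniteDimensional ℝ V]
  {μ : Measure V} [μ.IsAddHaarMeasure]

theorem integral_fderiv_apply_eq_zero {h : V → ℝ} (hh : ContDiff ℝ 1 h)
    (hc : HasCompactSupport h) (v : V) : ∫ x, fderiv ℝ h x v ∂μ = 0 := by
  simpa using integral_bilin_fderiv_of_lipschitzWith (μ := μ) (ContinuousLinearMap.mul ℝ ℝ)
    (LipschitzWith.const (α := V) (1 : ℝ)) hh hc v

theorem integral_cofactorPairing_fderiv_of_contDiff (η : W [⋀^ι]→L[ℝ] ℝ) (b : ι → V)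
    {f φ : V → W} (hf : ContDiff ℝ 2 f) (hφ : ContDiff ℝ 1 φ) (hφc : HasCompactSupport φ) :
    ∫ x, cofactorPairing η b (fderiv ℝ f x) (fderiv ℝ φ x) ∂μ = 0 := by
  have hdf : ContDiff ℝ 1 (fderiv ℝ f) := hf.fderiv_right (by norm_num)
  have hm (j : ι) : ContDiff ℝ 1 fun x ↦ fderiv ℝ f x (b j) := hdf.clm_apply contDiff_const
  let Θ (i : ι) (x : V) : ℝ := η (Function.update (fun j ↦ fderiv ℝ f x (b j)) i (φ x))
  have hΘ (i : ι) : ContDiff ℝ 1 (Θ i) := by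
    refine η.toContinuousMultilinearMap.contDiff.comp (contDiff_pi.2 fun j ↦ ?_)
    rcases eq_or_ne j i with rfl | hji
    · simpa using hφ
    · simpa [hji] using hm j
  have hΘc (i : ι) : HasCompactSupport (Θ i) := by
    refine hφc.mono fun x hx ↦ ?_
    contrapose! hx
    exact Function.notMem_support.2
      (η.map_coord_zero i (by simpa using Function.notMem_support.1 hx))
  have hsymm (x : V) (i k : ι) : fderiv ℝ (fun y ↦ fderiv ℝ f y (b k)) x (b i) =
      fderiv ℝ (fun y ↦ fderiv ℝ f y (b i)) x (b k) := by
    have hdiff := hdf.differentiable one_ne_zero x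
    rw [fderiv_clm_apply hdiff (differentiableAt_const _),
      fderiv_clm_apply hdiff (differentiableAt_const _)]
    simpa using (hf.contDiffAt.isSymmSndFDerivAt (by simp)) (b i) (b k)
  have hdiv (x : V) : cofactorPairing η b (fderiv ℝ f x) (fderiv ℝ φ x) =
      ∑ i, fderiv ℝ (Θ i) x (b i) := by
    simp only [Θ, fderiv_alternating_update_apply η
      (fun j ↦ (hm j).differentiable one_ne_zero x) (hφ.differentiable one_ne_zero x),
      Finset.sum_add_distrib]
    rw [sum_sum_alternating_update_update_eq_zero η _ _ (hsymm x), add_zero, cofactorPairing]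
  simp_rw [hdiv]
  rw [integral_finsetSum]
  · exact Finset.sum_eq_zero fun i _ ↦ integral_fderiv_apply_eq_zero (hΘ i) (hΘc i) _
  · intro i _
    exact (((hΘ i).continuous_fderiv one_ne_zero).clm_apply
      continuous_const).integrable_of_hasCompactSupport ((hΘc i).fderiv_apply ℝ (b i))

theorem integral_cofactorPairing_fderiv_of_lipschitzWith [FiniteDimensional ℝ W]
    (η : W [⋀^ι]→L[ℝ] ℝ) (b : ι → V) {C D : ℝ≥0} {f φ : V → W} (hf : LipschitzWith C f)
    (hφ : LipschitzWith D φ) (hφc : HasCompactSupport φ) :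
    ∫ x, cofactorPairing η b (fderiv ℝ f x) (fderiv ℝ φ x) ∂μ = 0 := by
  obtain ⟨ρ, hρ, hρi, hρr⟩ := exists_contDiffBump_seq V
  refine tendsto_nhds_unique (tendsto_integral_fderiv_mollify (continuous_cofactorPairing η b)
    (cofactorPairing_zero η b) hf hφ hφc hρ hρi hρr) ?_
  refine tendsto_const_nhds.congr fun n ↦ (integral_cofactorPairing_fderiv_of_contDiff η b
    (contDiff_mollify (ρ n) hf.continuous.locallyIntegrable 2)
    (contDiff_mollify (ρ n) hφ.continuous.locallyIntegrable 1)
    ((ρ n).hasCompactSupport_normed.convolution _ hφc)).symm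

end Piola

section Caccioppoli

theorem lipschitzWith_smul_of_norm_le {X W : Type*} [PseudoMetricSpace X] [NormedAddCommGroup W]
    [NormedSpace ℝ W] {χ : X → ℝ} {w : X → W} {C D M N : ℝ≥0} (hχ : LipschitzWith C χ)
    (hw : LipschitzWith D w) (hχM : ∀ x, ‖χ x‖ ≤ M) (hwN : ∀ x, ‖w x‖ ≤ N) :
    LipschitzWith (M * D + C * N) fun x ↦ χ x • w x := by
  refine LipschitzWith.of_dist_le_mul fun x y ↦ ?_
  calc dist (χ x • w x) (χ y • w y) = ‖χ x • (w x - w y) + (χ x - χ y) • w y‖ := by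
        rw [dist_eq_norm, smul_sub, sub_smul, sub_add_sub_cancel]
    _ ≤ ‖χ x‖ * dist (w x) (w y) + dist (χ x) (χ y) * ‖w y‖ := by
        grw [norm_add_le, norm_smul, norm_smul, dist_eq_norm, dist_eq_norm]
    _ ≤ M * (D * dist x y) + C * dist x y * N := by
        gcongr
        exacts [hχM x, hw.dist_le_mul x y, hχ.dist_le_mul x y, hwN y]
    _ = (M * D + C * N : ℝ≥0) * dist x y := by push_cast; ring

theorem exists_lipschitzWith_sq_smul_sub {V W : Type*} [NormedAddCommGroup V] [NormedAddCommGroup W]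
    [NormedSpace ℝ W] {f : V → W} {C : ℝ≥0} (hf : LipschitzWith C f) {ζ : V → ℝ} {Z : ℝ≥0}
    (hζ : LipschitzWith Z ζ) (hζ0 : ∀ x, 0 ≤ ζ x) (hζ1 : ∀ x, ζ x ≤ 1) {S : Set V}
    (hS : IsCompact S) (hζS : ∀ x ∉ S, ζ x = 0) (h : V) :
    ∃ D, LipschitzWith D (fun y ↦ ζ y ^ 2 • (f (y + h) - f y)) ∧
      HasCompactSupport (fun y ↦ ζ y ^ 2 • (f (y + h) - f y)) ∧
      tsupport (fun y ↦ ζ y ^ 2 • (f (y + h) - f y)) ⊆ S := by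
  have hw : LipschitzWith (C + C) fun y ↦ f (y + h) - f y :=
    .sub (.of_dist_le_mul fun x y ↦ by simpa using hf.dist_le_mul (x + h) (y + h)) hf
  have hwh (y : V) : ‖f (y + h) - f y‖ ≤ C * ‖h‖₊ := by simpa using hf.norm_sub_le (y + h) y
  have hζ1' (y : V) : ‖ζ y‖ ≤ (1 : ℝ≥0) := by simpa [abs_of_nonneg (hζ0 y)] using hζ1 y
  have hζ2 := lipschitzWith_smul_of_norm_le hζ hζ hζ1' hζ1'
  have hzero : ∀ y ∉ S, ζ y ^ 2 • (f (y + h) - f y) = 0 := fun y hy ↦ by simp [hζS y hy]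
  refine ⟨_, lipschitzWith_smul_of_norm_le (M := 1) (N := C * ‖h‖₊) (by simpa [sq] using hζ2) hw
      (fun y ↦ ?_) hwh, .intro hS hzero, closure_minimal (fun y hy ↦ ?_) hS.isClosed⟩
  · simpa [abs_of_nonneg (hζ0 y), pow_le_one_iff_of_nonneg (hζ0 y)] using hζ1 y
  · exact not_imp_comm.1 (hzero y) hy

-- Young's inequality absorbs the terms linear in `ζ * ‖z‖` into the coercive one.
theorem caccioppoli_pointwise {E : Type*} [NormedAddCommGroup E] [NormedSpace ℝ E]
    {b b' : E →L[ℝ] E →L[ℝ] ℝ} {z q y : E} {c A Q δ ζ : ℝ} (hc : 0 < c)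
    (hb : c * ‖z‖ ^ 2 ≤ b z z) (hA : ‖b‖ ≤ A) (hδ : ‖b' y‖ ≤ δ) (hq : ‖q‖ ≤ Q) (hζ : 0 ≤ ζ)
    (hζ1 : ζ ≤ 1) :
    c / 2 * (ζ * ‖z‖) ^ 2 ≤ b z (ζ ^ 2 • z + (2 * ζ) • q) + b' y (ζ ^ 2 • z + (2 * ζ) • q) +
      ((2 * A * Q + δ) ^ 2 / (2 * c) + 2 * δ * Q) := by
  set s := ζ * ‖z‖
  have _ : 0 ≤ s := by positivity
  have hA0 : 0 ≤ A := (norm_nonneg b).trans hA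
  have hδ0 : 0 ≤ δ := (norm_nonneg _).trans hδ
  have hbz : c * s ^ 2 ≤ b z (ζ ^ 2 • z) := by
    calc c * s ^ 2 = ζ ^ 2 * (c * ‖z‖ ^ 2) := by ring
      _ ≤ ζ ^ 2 * b z z := by gcongr
      _ = b z (ζ ^ 2 • z) := by simp
  have hbq : -(2 * A * Q * s) ≤ b z ((2 * ζ) • q) := by
    refine neg_le_of_abs_le ((b.le_opNorm₂ _ _).trans ?_)
    calc ‖b‖ * ‖z‖ * ‖(2 * ζ) • q‖ = ‖b‖ * ‖q‖ * (2 * s) := by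
          rw [norm_smul, Real.norm_of_nonneg (by positivity)]; ring
      _ ≤ A * Q * (2 * s) := by gcongr
      _ = 2 * A * Q * s := by ring
  have hb'y : -(δ * (s + 2 * Q)) ≤ b' y (ζ ^ 2 • z + (2 * ζ) • q) := by
    refine neg_le_of_abs_le (((b' y).le_opNorm _).trans ?_)
    gcongr
    calc ‖ζ ^ 2 • z + (2 * ζ) • q‖ ≤ ζ * s + 2 * ζ * ‖q‖ := by
          grw [norm_add_le, norm_smul, norm_smul, Real.norm_of_nonneg (by positivity),
            Real.norm_of_nonneg (by positivity)]
          exact le_of_eq (by ring)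
      _ ≤ 1 * s + 2 * 1 * Q := by gcongr
      _ = s + 2 * Q := by ring
  have young : 0 ≤ c / 2 * s ^ 2 - (2 * A * Q + δ) * s + (2 * A * Q + δ) ^ 2 / (2 * c) := by
    have : c / 2 * s ^ 2 - (2 * A * Q + δ) * s + (2 * A * Q + δ) ^ 2 / (2 * c) =
        (c * s - (2 * A * Q + δ)) ^ 2 / (2 * c) := by field_simp; ring
    rw [this]
    positivity
  rw [map_add (b z)]
  linarith

variable {V W : Type*} [NormedAddCommGroup V] [NormedSpace ℝ V]
  [NormedAddCommGroup W] [NormedSpace ℝ W]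

theorem fderiv_sq_smul_sub {ζ : V → ℝ} {f : V → W} {x h : V} (hζ : DifferentiableAt ℝ ζ x)
    (hf : DifferentiableAt ℝ f x) (hfh : DifferentiableAt ℝ f (x + h)) :
    fderiv ℝ (fun y ↦ ζ y ^ 2 • (f (y + h) - f y)) x =
      ζ x ^ 2 • (fderiv ℝ f (x + h) - fderiv ℝ f x) +
        (2 * ζ x) • (fderiv ℝ ζ x).smulRight (f (x + h) - f x) := by
  have hw : HasFDerivAt (fun y ↦ f (y + h) - f y) (fderiv ℝ f (x + h) - fderiv ℝ f x) x :=
    ((hasFDerivAt_comp_add_right h).2 hfh.hasFDerivAt).sub hf.hasFDerivAt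
  refine ((hζ.hasFDerivAt.pow 2).smul hw).fderiv.trans ?_
  ext v
  simp [smul_smul]

variable [MeasurableSpace V] {μ : Measure V}

/-- `f` is a weak solution on `U` of the linear second-order system in divergence form with
coefficients `B`, tested against compactly supported Lipschitz maps. -/
def IsWeakSolutionOn (μ : Measure V) (B : V → (V →L[ℝ] W) →L[ℝ] (V →L[ℝ] W) →L[ℝ] ℝ)
    (f : V → W) (U : Set V) : Prop :=
  ∀ (D : ℝ≥0) (φ : V → W), LipschitzWith D φ → HasCompactSupport φ → tsupport φ ⊆ U →
    ∫ x, B x (fderiv ℝ f x) (fderiv ℝ φ x) ∂μ = 0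

namespace IsWeakSolutionOn

variable {B B' : V → (V →L[ℝ] W) →L[ℝ] (V →L[ℝ] W) →L[ℝ] ℝ} {f f' : V → W}
  {U U' : Set V}

theorem mono (h : IsWeakSolutionOn μ B f U) (hU : U' ⊆ U) : IsWeakSolutionOn μ B f U' :=
  fun D φ hφ hφc hφU ↦ h D φ hφ hφc (hφU.trans hU)

theorem congr (h : IsWeakSolutionOn μ B f U) (hB : EqOn B B' U) :
    IsWeakSolutionOn μ B' f U := by
  intro D φ hφ hφc hφU
  rw [← h D φ hφ hφc hφU]
  refine integral_congr_ae (.of_forall fun x ↦ ?_)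
  by_cases hx : x ∈ tsupport φ
  · simp [hB (hφU hx)]
  · simp [fderiv_of_notMem_tsupport ℝ hx]

theorem congr_fun (h : IsWeakSolutionOn μ B f U) (hU : IsOpen U) (hf : EqOn f f' U) :
    IsWeakSolutionOn μ B f' U := by
  intro D φ hφ hφc hφU
  rw [← h D φ hφ hφc hφU]
  refine integral_congr_ae (.of_forall fun x ↦ ?_)
  by_cases hx : x ∈ tsupport φ
  · simp [(hf.eventuallyEq_of_mem (hU.mem_nhds (hφU hx))).fderiv_eq]
  · simp [fderiv_of_notMem_tsupport ℝ hx]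

variable [BorelSpace V]

theorem comp_add_right [μ.IsAddRightInvariant] (hf : IsWeakSolutionOn μ B f U) (h : V) :
    IsWeakSolutionOn μ (fun x ↦ B (x + h)) (fun x ↦ f (x + h)) ((· + h) ⁻¹' U) := by
  intro D φ hφ hφc hφU
  have hφh : LipschitzWith D fun x ↦ φ (x - h) :=
    .of_dist_le_mul fun x y ↦ by simpa using hφ.dist_le_mul (x - h) (y - h)
  rw [← hf D _ hφh (hφc.comp_homeomorph (Homeomorph.subRight h)) ?_,
    ← integral_add_right_eq_self (fun x ↦ B x (fderiv ℝ f x) _) h]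
  · simp [fderiv_comp_add_right, fderiv_comp_sub]
  · intro x hx
    simpa using hφU (tsupport_comp_subset_preimage φ (f := fun x ↦ x - h) (by fun_prop) hx)

end IsWeakSolutionOn

section Estimate

variable {B : V → (V →L[ℝ] W) →L[ℝ] (V →L[ℝ] W) →L[ℝ] ℝ} {f φ : V → W} {C D L : ℝ≥0}

variable [FiniteDimensional ℝ V] [BorelSpace V] [μ.IsAddHaarMeasure] [FiniteDimensional ℝ W]

theorem integrable_apply_fderiv (hB : Continuous B) (hf : LipschitzWith C f)
    (hφ : LipschitzWith D φ) (hφc : HasCompactSupport φ) :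
    Integrable (fun x ↦ B x (fderiv ℝ f x) (fderiv ℝ φ x)) μ := by
  obtain ⟨A, hA⟩ := hφc.isCompact.exists_bound_of_continuousOn (f := B) hB.continuousOn
  have hzero {x : V} (hx : x ∉ tsupport φ) : B x (fderiv ℝ f x) (fderiv ℝ φ x) = 0 := by
    simp [fderiv_of_notMem_tsupport ℝ hx]
  refine integrable_of_norm_le_of_eq_zero_off_compact (M := max A 0 * C * D) ?_ (fun x ↦ ?_)
    hφc.isCompact fun x ↦ hzero
  · have hcont : Continuous fun p : V × (V →L[ℝ] W) × (V →L[ℝ] W) ↦ B p.1 p.2.1 p.2.2 := by fun_prop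
    exact hcont.comp_aestronglyMeasurable (aestronglyMeasurable_id.prodMk
      ((aestronglyMeasurable_fderiv μ f).prodMk (aestronglyMeasurable_fderiv μ φ)))
  · by_cases hx : x ∈ tsupport φ
    · calc _ ≤ ‖B x‖ * ‖fderiv ℝ f x‖ * ‖fderiv ℝ φ x‖ := (B x).le_opNorm₂ _ _
        _ ≤ max A 0 * C * D := by
          gcongr
          exacts [(hA x hx).trans (le_max_left _ _), norm_fderiv_le_of_lipschitz ℝ hf,
            norm_fderiv_le_of_lipschitz ℝ hφ]
    · rw [hzero hx, norm_zero]
      positivity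

theorem IsWeakSolutionOn.integral_sub_eq_zero {U : Set V} (hsol : IsWeakSolutionOn μ B f U)
    (hB : Continuous B) (hf : LipschitzWith C f) (hφ : LipschitzWith D φ)
    (hφc : HasCompactSupport φ) {h : V} (hφU : tsupport φ ⊆ U)
    (hφUh : tsupport φ ⊆ (· + h) ⁻¹' U) :
    Integrable (fun x ↦ B (x + h) (fderiv ℝ f (x + h)) (fderiv ℝ φ x) -
      B x (fderiv ℝ f x) (fderiv ℝ φ x)) μ ∧
    ∫ x, (B (x + h) (fderiv ℝ f (x + h)) (fderiv ℝ φ x) -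
      B x (fderiv ℝ f x) (fderiv ℝ φ x)) ∂μ = 0 := by
  have hfh : LipschitzWith C fun x ↦ f (x + h) :=
    .of_dist_le_mul fun x y ↦ by simpa using hf.dist_le_mul (x + h) (y + h)
  have hinth := integrable_apply_fderiv (μ := μ) (B := fun x ↦ B (x + h)) (by fun_prop) hfh hφ hφc
  have hsolh := hsol.comp_add_right h D φ hφ hφc hφUh
  simp only [fderiv_comp_add_right] at hinth hsolh
  have hint := integrable_apply_fderiv (μ := μ) hB hf hφ hφc
  exact ⟨hinth.sub hint, by rw [integral_sub hinth hint, hsolh, hsol D φ hφ hφc hφU, sub_zero]⟩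

theorem ae_caccioppoli (hB : LipschitzWith L B) (hf : LipschitzWith C f) {ζ : V → ℝ} {Z : ℝ≥0}
    (hζ : LipschitzWith Z ζ) (hζd : Differentiable ℝ ζ) (hζ0 : ∀ x, 0 ≤ ζ x) (hζ1 : ∀ x, ζ x ≤ 1)
    {S : Set V} (hζS : ∀ x ∉ S, ζ x = 0) {c A : ℝ} (hc : 0 < c) (hA : ∀ x ∈ S, ‖B x‖ ≤ A)
    (hBc : ∀ x ∈ S, ∀ T, c * ‖T‖ ^ 2 ≤ B x T T) (h : V) :
    ∀ᵐ x ∂μ, c / 2 * (ζ x * ‖fderiv ℝ f (x + h) - fderiv ℝ f x‖) ^ 2 ≤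
      (B (x + h) (fderiv ℝ f (x + h)) (fderiv ℝ (fun y ↦ ζ y ^ 2 • (f (y + h) - f y)) x) -
        B x (fderiv ℝ f x) (fderiv ℝ (fun y ↦ ζ y ^ 2 • (f (y + h) - f y)) x)) +
      S.indicator (fun _ ↦ ((2 * A * Z * C + L * C) ^ 2 / (2 * c) + 2 * L * Z * C ^ 2) * ‖h‖ ^ 2)
        x := by
  have hdiff := hf.ae_differentiableAt (μ := μ)
  filter_upwards [hdiff,
    (measurePreserving_add_right μ h).quasiMeasurePreserving.ae hdiff] with x hd hdh
  rw [fderiv_sq_smul_sub (hζd x) hd hdh]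
  by_cases hx : x ∈ S
  · have hδ : ‖(B (x + h) - B x) (fderiv ℝ f (x + h))‖ ≤ L * C * ‖h‖ := by
      calc _ ≤ ‖B (x + h) - B x‖ * ‖fderiv ℝ f (x + h)‖ := ContinuousLinearMap.le_opNorm _ _
        _ ≤ L * ‖x + h - x‖ * C := by
          gcongr
          exacts [hB.norm_sub_le _ _, norm_fderiv_le_of_lipschitz ℝ hf]
        _ = L * C * ‖h‖ := by rw [add_sub_cancel_left]; ring
    have hQ : ‖(fderiv ℝ ζ x).smulRight (f (x + h) - f x)‖ ≤ Z * C * ‖h‖ := by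
      rw [ContinuousLinearMap.norm_smulRight_apply]
      calc _ ≤ Z * (C * ‖x + h - x‖) := by
            gcongr
            exacts [norm_fderiv_le_of_lipschitz ℝ hζ, hf.norm_sub_le _ _]
        _ = Z * C * ‖h‖ := by rw [add_sub_cancel_left]; ring
    convert caccioppoli_pointwise hc (hBc x hx _) (hA x hx) hδ hQ (hζ0 x) (hζ1 x) using 1
    rw [indicator_of_mem hx]
    simp only [_root_.sub_apply, map_sub]
    ring
  · simp [hζS x hx, hx]

theorem IsWeakSolutionOn.setIntegral_norm_sq_fderiv_sub_le {U S s : Set V}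
    (hsol : IsWeakSolutionOn μ B f U) (hB : LipschitzWith L B) (hf : LipschitzWith C f)
    {ζ : V → ℝ} {Z : ℝ≥0} (hζ : LipschitzWith Z ζ) (hζd : Differentiable ℝ ζ)
    (hζ0 : ∀ x, 0 ≤ ζ x) (hζ1 : ∀ x, ζ x ≤ 1) (hS : IsCompact S) (hζS : ∀ x ∉ S, ζ x = 0)
    (hs : MeasurableSet s) (hζs : ∀ x ∈ s, ζ x = 1) {c A : ℝ} (hc : 0 < c)
    (hA : ∀ x ∈ S, ‖B x‖ ≤ A) (hBc : ∀ x ∈ S, ∀ T, c * ‖T‖ ^ 2 ≤ B x T T) {h : V}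
    (hSU : S ⊆ U) (hSUh : S ⊆ (· + h) ⁻¹' U) :
    ∫ x in s, c / 2 * ‖fderiv ℝ f (x + h) - fderiv ℝ f x‖ ^ 2 ∂μ ≤
      ((2 * A * Z * C + L * C) ^ 2 / (2 * c) + 2 * L * Z * C ^ 2) * ‖h‖ ^ 2 * μ.real S := by
  obtain ⟨D, hφ, hφc, hφS⟩ := exists_lipschitzWith_sq_smul_sub hf hζ hζ0 hζ1 hS hζS h
  obtain ⟨hint, hzero⟩ :=
    hsol.integral_sub_eq_zero hB.continuous hf hφ hφc (hφS.trans hSU) (hφS.trans hSUh)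
  set K := (2 * A * Z * C + L * C) ^ 2 / (2 * c) + 2 * L * Z * C ^ 2
  have hSi : Integrable (S.indicator fun _ ↦ K * ‖h‖ ^ 2) μ :=
    (integrableOn_const hS.measure_ne_top).integrable_indicator hS.measurableSet
  rw [← integral_indicator hs]
  refine (integral_mono_of_nonneg (.of_forall (indicator_nonneg fun x _ ↦ by positivity))
    (hint.add hSi) ?_).trans_eq ?_
  · filter_upwards [ae_caccioppoli (μ := μ) hB hf hζ hζd hζ0 hζ1 hζS hc hA hBc h] with x hx
    refine le_trans ?_ hx
    by_cases hxs : x ∈ s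
    · simp [hxs, hζs x hxs]
    · rw [indicator_of_notMem hxs]
      positivity
  · rw [integral_add' hint hSi, hzero, integral_indicator hS.measurableSet]
    simp [mul_comm]

theorem IsWeakSolutionOn.exists_setIntegral_norm_sq_fderiv_sub_le {x₀ : V} {r : ℝ}
    (hsol : IsWeakSolutionOn μ B f (closedBall x₀ (3 * r))) (hr : 0 < r) (hB : LipschitzWith L B)
    (hf : LipschitzWith C f) {c : ℝ} (hc : 0 < c)
    (hBc : ∀ x ∈ closedBall x₀ (3 * r), ∀ T, c * ‖T‖ ^ 2 ≤ B x T T) :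
    ∃ K, ∀ h : V, ‖h‖ ≤ r →
      ∫ x in closedBall x₀ r, ‖fderiv ℝ f (x + h) - fderiv ℝ f x‖ ^ 2 ∂μ ≤ K * ‖h‖ ^ 2 := by
  let ζ : ContDiffBump x₀ := ⟨r, 2 * r, hr, by linarith⟩
  set S := closedBall x₀ (2 * r)
  have hS : IsCompact S := isCompact_closedBall x₀ (2 * r)
  have hS3 : S ⊆ closedBall x₀ (3 * r) := closedBall_subset_closedBall (by linarith)
  obtain ⟨Z, hZ⟩ := ContDiff.lipschitzWith_of_hasCompactSupport ζ.hasCompactSupport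
    (ζ.contDiff (n := 1)) one_ne_zero
  obtain ⟨A, hA⟩ := hS.exists_bound_of_continuousOn hB.continuous.continuousOn
  set K₀ := (2 * A * Z * C + L * C) ^ 2 / (2 * c) + 2 * L * Z * C ^ 2 with hK₀
  refine ⟨2 / c * (K₀ * μ.real S), fun h hh ↦ ?_⟩
  have hSh : S ⊆ (· + h) ⁻¹' closedBall x₀ (3 * r) := fun x hx ↦ mem_closedBall.2 <|
    calc dist (x + h) x₀ ≤ ‖h‖ + dist x x₀ := by simpa using dist_triangle (x + h) x x₀
      _ ≤ r + 2 * r := add_le_add hh (mem_closedBall.1 hx)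
      _ = 3 * r := by ring
  have hest := hsol.setIntegral_norm_sq_fderiv_sub_le hB hf hZ
    (ζ.contDiff.differentiable one_ne_zero) (fun _ ↦ ζ.nonneg) (fun _ ↦ ζ.le_one) hS
    (fun x hx ↦ ζ.zero_of_le_dist (not_le.1 hx).le) measurableSet_closedBall
    (fun _ ↦ ζ.one_of_mem_closedBall) hc hA (fun x hx ↦ hBc x (hS3 hx)) hS3 hSh
  rw [integral_const_mul, ← le_div_iff₀' (by positivity), ← hK₀] at hest
  refine hest.trans_eq ?_
  field_simp

end Estimate

end Caccioppoli

section WeakCompactness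

theorem exists_forall_tendsto_inner {H ι : Type*} [NormedAddCommGroup H] [InnerProductSpace ℝ H]
    [CompleteSpace H] {l : Filter ι} [l.NeBot] {Y : ι → H} {K : ℝ} (hK : ∀ᶠ t in l, ‖Y t‖ ≤ K)
    {S : Set H} (hY : ∀ z ∈ S, ∃ c, Tendsto (fun t ↦ ⟪Y t, z⟫) l (𝓝 c))
    (hS : ∀ y, (∀ z ∈ S, ⟪y, z⟫ = 0) → y = 0) :
    ∃ P : H, ∀ z, Tendsto (fun t ↦ ⟪Y t, z⟫) l (𝓝 ⟪P, z⟫) := by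
  let J : H → WeakDual ℝ H := fun y ↦ StrongDual.toWeakDual (InnerProductSpace.toDual ℝ H y)
  have hJ (y z : H) : J y z = ⟪y, z⟫ := InnerProductSpace.toDual_apply_apply
  have hcpt : IsCompact (WeakDual.toStrongDual ⁻¹' closedBall (0 : StrongDual ℝ H) K) :=
    WeakDual.isCompact_closedBall 0 K
  have hmem : ∀ᶠ t in l,
      J (Y t) ∈ WeakDual.toStrongDual ⁻¹' closedBall (0 : StrongDual ℝ H) K := by
    filter_upwards [hK] with t ht
    simpa [J] using ht
  have heval {p : WeakDual ℝ H} (hp : MapClusterPt p l (J ∘ Y)) {z : H} {c : ℝ}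
      (hc : Tendsto (fun t ↦ ⟪Y t, z⟫) l (𝓝 c)) : p z = c := by
    have hpz := hp.tendsto_comp ((WeakDual.eval_continuous z).tendsto p)
    have : ClusterPt (p z) (𝓝 c) := hpz.clusterPt.mono (hc.congr fun t ↦ (hJ _ _).symm)
    exact eq_of_nhds_neBot this
  obtain ⟨p, -, hp⟩ := hcpt.exists_mapClusterPt (tendsto_principal.2 hmem)
  have hrepr (q : WeakDual ℝ H) : ∃ y, J y = q :=
    ⟨(InnerProductSpace.toDual ℝ H).symm (WeakDual.toStrongDual q), by simp [J]⟩
  obtain ⟨P, rfl⟩ := hrepr p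
  have hlim : Tendsto (J ∘ Y) l (𝓝 (J P)) := by
    refine hcpt.tendsto_nhds_of_unique_mapClusterPt hmem fun q _ hq ↦ ?_
    obtain ⟨Q, rfl⟩ := hrepr q
    refine congrArg J (sub_eq_zero.1 (hS _ fun z hz ↦ ?_))
    obtain ⟨c, hc⟩ := hY z hz
    rw [inner_sub_left, ← hJ, ← hJ, heval hq hc, heval hp hc, sub_self]
  exact ⟨P, fun z ↦ by
    simpa [hJ, Function.comp_def] using ((WeakDual.eval_continuous z).tendsto _).comp hlim⟩

end WeakCompactness

section TestFunction

variable {V A : Type*} [NormedAddCommGroup V] [MeasurableSpace V] {μ : Measure V}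
  [NormedAddCommGroup A] [NormedSpace ℝ A] {U : Set V} {ψ : V → ℝ}

theorem setIntegral_smul_of_tsupport_subset (hψU : tsupport ψ ⊆ U) (P : V → A) :
    ∫ x in U, ψ x • P x ∂μ = ∫ x, ψ x • P x ∂μ :=
  setIntegral_eq_integral_of_forall_compl_eq_zero fun x hx ↦ by
    simp [image_eq_zero_of_notMem_tsupport fun h ↦ hx (hψU h)]

variable [BorelSpace V]

theorem locallyIntegrableOn_of_memLp_two {A : Type*} [NormedAddCommGroup A]
    [IsLocallyFiniteMeasure μ] {P : V → A}
    (hP : MemLp P 2 (μ.restrict U)) : LocallyIntegrableOn P U μ :=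
  locallyIntegrableOn_of_locallyIntegrable_restrict (hP.locallyIntegrable one_le_two)

theorem integrable_smul_of_locallyIntegrableOn {P : V → A} (hP : LocallyIntegrableOn P U μ)
    (hψ : Continuous ψ) (hψc : HasCompactSupport ψ) (hψU : tsupport ψ ⊆ U) :
    Integrable (fun x ↦ ψ x • P x) μ :=
  ((hP.integrableOn_compact_subset hψU hψc).continuousOn_smul hψ.continuousOn
    hψc).integrable_of_forall_notMem_eq_zero fun x hx ↦ by
      simp [image_eq_zero_of_notMem_tsupport hx]

theorem memLp_diffQuot [NormedSpace ℝ V] [μ.IsAddRightInvariant] {u : V → A} (hu : MemLp u ⊤ μ)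
    (hU : μ U ≠ ⊤) (v : V) (t : ℝ) : MemLp (diffQuot v t u) 2 (μ.restrict U) := by
  have : IsFiniteMeasure (μ.restrict U) := ⟨by simpa using hU.lt_top⟩
  have hshift : MemLp (fun x ↦ u (x + t • v)) ⊤ μ :=
    hu.comp_measurePreserving (measurePreserving_add_right μ (t • v))
  exact (((hshift.sub hu).const_smul t⁻¹).restrict U).mono_exponent le_top

variable [NormedSpace ℝ V] [FiniteDimensional ℝ V]

theorem ae_eq_of_forall_integral_smul_eq [CompleteSpace A] {P Q : V → A} (hU : IsOpen U)
    (hP : LocallyIntegrableOn P U μ) (hQ : LocallyIntegrableOn Q U μ)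
    (h : ∀ ψ : V → ℝ, ContDiff ℝ ∞ ψ → HasCompactSupport ψ → tsupport ψ ⊆ U →
      ∫ x, ψ x • P x ∂μ = ∫ x, ψ x • Q x ∂μ) : ∀ᵐ x ∂μ, x ∈ U → P x = Q x := by
  suffices ∀ᵐ x ∂μ, x ∈ U → P x - Q x = 0 by simpa only [sub_eq_zero]
  refine hU.ae_eq_zero_of_integral_contDiff_smul_eq_zero (hP.sub hQ) fun ψ hψ hψc hψU ↦ ?_
  simp only [smul_sub]
  rw [integral_sub (integrable_smul_of_locallyIntegrableOn hP hψ.continuous hψc hψU)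
    (integrable_smul_of_locallyIntegrableOn hQ hψ.continuous hψc hψU), h ψ hψ hψc hψU, sub_self]

theorem integral_mul_fderiv_of_contDiffOn [μ.IsAddHaarMeasure] {g : V → ℝ} (hU : IsOpen U)
    (hg : ContDiffOn ℝ 1 g U) (hψ : ContDiff ℝ 1 ψ) (hψc : HasCompactSupport ψ)
    (hψU : tsupport ψ ⊆ U) (v : V) :
    ∫ x, ψ x * fderiv ℝ g x v ∂μ = -∫ x, fderiv ℝ ψ x v * g x ∂μ := by
  have hgat {x : V} (hx : x ∈ U) : ContDiffAt ℝ 1 g x := hg.contDiffAt (hU.mem_nhds hx)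
  have hψg : ContDiff ℝ 1 (fun x ↦ ψ x * g x) := (contMDiff_of_tsupport fun x hx ↦
    (hψ.contDiffAt.mul (hgat (hψU (tsupport_mul_subset_left hx)))).contMDiffAt).contDiff
  have hdψ (w : V) : Continuous fun x ↦ fderiv ℝ ψ x w :=
    (hψ.continuous_fderiv one_ne_zero).clm_apply continuous_const
  have hdg : LocallyIntegrableOn (fun x ↦ fderiv ℝ g x v) U μ :=
    ((hg.continuousOn_fderiv_of_isOpen hU le_rfl).clm_apply
      continuousOn_const).locallyIntegrableOn hU.measurableSet
  have hprod (x : V) :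
      fderiv ℝ (fun y ↦ ψ y * g y) x v = ψ x * fderiv ℝ g x v + fderiv ℝ ψ x v * g x := by
    by_cases hx : x ∈ tsupport ψ
    · rw [fderiv_fun_mul (hψ.differentiable one_ne_zero x)
        ((hgat (hψU hx)).differentiableAt one_ne_zero)]
      simp [mul_comm]
    · rw [fderiv_of_notMem_tsupport ℝ fun h ↦ hx (tsupport_mul_subset_left h),
        fderiv_of_notMem_tsupport ℝ hx, image_eq_zero_of_notMem_tsupport hx]
      simp
  have hzero := integral_fderiv_apply_eq_zero (μ := μ) hψg hψc.mul_right v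
  simp only [hprod] at hzero
  rw [integral_add] at hzero
  · exact eq_neg_of_add_eq_zero_left hzero
  · exact integrable_smul_of_locallyIntegrableOn hdg hψ.continuous hψc hψU
  · exact integrable_smul_of_locallyIntegrableOn
      (hg.continuousOn.locallyIntegrableOn hU.measurableSet) (hdψ v) (hψc.fderiv_apply ℝ v)
      ((tsupport_fderiv_apply_subset ℝ v).trans hψU)

end TestFunction

section WeakLimit

variable {V W : Type*} [NormedAddCommGroup V] [NormedSpace ℝ V] [MeasurableSpace V]
  {μ : Measure V} [NormedAddCommGroup W] [InnerProductSpace ℝ W] {U : Set V} {v : V} {u P : V → W}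

/-- `P` is the weak `L²` limit on `U` of the difference quotients of `u` in the direction `v`,
and these difference quotients are bounded in `L²(U)`. -/
structure HasL2LineDerivOn (μ : Measure V) (v : V) (u P : V → W) (U : Set V) : Prop where
  exists_bound : ∃ K, ∀ᶠ t in 𝓝[≠] (0 : ℝ), ∫ x in U, ‖diffQuot v t u x‖ ^ 2 ∂μ ≤ K
  memLp : MemLp P 2 (μ.restrict U)
  tendsto : ∀ Ψ, MemLp Ψ 2 (μ.restrict U) →
    Tendsto (fun t ↦ ∫ x in U, ⟪diffQuot v t u x, Ψ x⟫ ∂μ) (𝓝[≠] 0)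
      (𝓝 (∫ x in U, ⟪P x, Ψ x⟫ ∂μ))

theorem integrable_inner_of_memLp_two {α : Type*} [MeasurableSpace α] {ν : Measure α}
    {a b : α → W} (ha : MemLp a 2 ν) (hb : MemLp b 2 ν) : Integrable (fun x ↦ ⟪a x, b x⟫) ν :=
  memLp_one_iff_integrable.1 ((innerSL ℝ).memLp_of_bilin 1 ha hb)

theorem inner_toLp {α : Type*} [MeasurableSpace α] {ν : Measure α} {a b : α → W}
    (ha : MemLp a 2 ν) (hb : MemLp b 2 ν) : ⟪ha.toLp a, hb.toLp b⟫ = ∫ x, ⟪a x, b x⟫ ∂ν := by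
  rw [L2.inner_def]
  refine integral_congr_ae ?_
  filter_upwards [ha.coeFn_toLp, hb.coeFn_toLp] with x hax hbx
  rw [hax, hbx]

theorem setIntegral_inner_diffQuot_inner [BorelSpace V] {a b : V → W} {ψ : V → ℝ} {M t : ℝ}
    (hψ : Continuous ψ) (hM : ∀ x, ‖ψ x‖ ≤ M)
    (hψa : MemLp (fun x ↦ ψ x • a x) 2 (μ.restrict U))
    (hψb : MemLp (fun x ↦ ψ x • b x) 2 (μ.restrict U))
    (hδa : MemLp (diffQuot v t a) 2 (μ.restrict U))
    (hδb : MemLp (diffQuot v t b) 2 (μ.restrict U)) :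
    ∫ x in U, ⟪diffQuot v t (fun y ↦ ⟪a y, b y⟫) x, ψ x • (1 : ℝ)⟫ ∂μ =
      ∫ x in U, ⟪diffQuot v t a x, ψ x • b x⟫ ∂μ + ∫ x in U, ⟪diffQuot v t b x, ψ x • a x⟫ ∂μ +
        t * ∫ x in U, ψ x * ⟪diffQuot v t a x, diffQuot v t b x⟫ ∂μ := by
  have hpt (x : V) : ⟪diffQuot v t (fun y ↦ ⟪a y, b y⟫) x, ψ x • (1 : ℝ)⟫ =
      ⟪diffQuot v t a x, ψ x • b x⟫ + ⟪diffQuot v t b x, ψ x • a x⟫ +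
        t * (ψ x * ⟪diffQuot v t a x, diffQuot v t b x⟫) := by
    rw [inner_diffQuot]
    simp only [real_inner_smul_right, smul_eq_mul, mul_one, Real.inner_apply]
    ring
  have hinta := integrable_inner_of_memLp_two hδa hψb
  have hintb := integrable_inner_of_memLp_two hδb hψa
  have hintab := (integrable_inner_of_memLp_two hδa hδb).bdd_mul
    hψ.aestronglyMeasurable (.of_forall hM)
  simp only [hpt]
  rw [integral_add _ (hintab.const_mul t), integral_add hinta hintb, integral_const_mul]
  exact hinta.add hintb

variable [BorelSpace V] [μ.IsAddHaarMeasure]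

theorem HasL2LineDerivOn.tendsto_mul_setIntegral_inner_diffQuot {a b A B : V → W}
    (hA : HasL2LineDerivOn μ v a A U) (hB : HasL2LineDerivOn μ v b B U) (ha : MemLp a ⊤ μ)
    (hb : MemLp b ⊤ μ) (hU : μ U ≠ ⊤) {ψ : V → ℝ} {M : ℝ} (hM : ∀ x, ‖ψ x‖ ≤ M) :
    Tendsto (fun t ↦ t * ∫ x in U, ψ x * ⟪diffQuot v t a x, diffQuot v t b x⟫ ∂μ) (𝓝[≠] 0)
      (𝓝 0) := by
  obtain ⟨K, hK⟩ := hA.exists_bound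
  obtain ⟨L, hL⟩ := hB.exists_bound
  have hM0 : 0 ≤ M := (norm_nonneg _).trans (hM 0)
  refine (tendsto_nhdsWithin_of_tendsto_nhds tendsto_id).zero_mul_isBoundedUnder_le
    (isBoundedUnder_of_eventually_le (a := M * (K + L)) ?_)
  filter_upwards [hK, hL] with t hKt hLt
  have hinta := (memLp_diffQuot ha hU v t).integrable_norm_pow two_ne_zero
  have hintb := (memLp_diffQuot hb hU v t).integrable_norm_pow two_ne_zero
  have hpt (x : V) : ‖ψ x * ⟪diffQuot v t a x, diffQuot v t b x⟫‖ ≤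
      M * (‖diffQuot v t a x‖ ^ 2 + ‖diffQuot v t b x‖ ^ 2) := by
    rw [norm_mul]
    gcongr
    · exact hM x
    · nlinarith [norm_inner_le_norm (𝕜 := ℝ) (diffQuot v t a x) (diffQuot v t b x),
        two_mul_le_add_sq ‖diffQuot v t a x‖ ‖diffQuot v t b x‖,
        norm_nonneg ⟪diffQuot v t a x, diffQuot v t b x⟫]
  calc ‖∫ x in U, ψ x * ⟪diffQuot v t a x, diffQuot v t b x⟫ ∂μ‖
      ≤ ∫ x in U, M * (‖diffQuot v t a x‖ ^ 2 + ‖diffQuot v t b x‖ ^ 2) ∂μ :=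
        norm_integral_le_of_norm_le ((hinta.add hintb).const_mul M) (.of_forall hpt)
    _ = M * (∫ x in U, ‖diffQuot v t a x‖ ^ 2 ∂μ + ∫ x in U, ‖diffQuot v t b x‖ ^ 2 ∂μ) := by
        rw [integral_const_mul, integral_add hinta hintb]
    _ ≤ M * (K + L) := by gcongr

variable [FiniteDimensional ℝ V]

theorem tendsto_setIntegral_inner_diffQuot (hu : LocallyIntegrable u μ) {ψ : V → ℝ}
    (hψ : ContDiff ℝ 1 ψ) (hψc : HasCompactSupport ψ) (hψU : tsupport ψ ⊆ U) (v : V) (w : W) :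
    Tendsto (fun t ↦ ∫ x in U, ⟪diffQuot v t u x, ψ x • w⟫ ∂μ) (𝓝[≠] 0)
      (𝓝 (-∫ x, fderiv ℝ ψ x v * ⟪u x, w⟫ ∂μ)) := by
  have hB := tendsto_integral_bilin_diffQuot_of_contDiff
    (ContinuousLinearMap.lsmul ℝ ℝ ∘L (innerSL ℝ w)) hu hψ hψc v
  refine (hB.congr fun t ↦ ?_).trans_eq ?_
  · rw [setIntegral_eq_integral_of_forall_compl_eq_zero fun x hx ↦ by
      simp [image_eq_zero_of_notMem_tsupport fun h ↦ hx (hψU h)]]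
    simp [real_inner_smul_right, real_inner_comm, mul_comm]
  · simp [real_inner_comm, mul_comm]

theorem inner_setIntegral_smul [CompleteSpace W] (hP : MemLp P 2 (μ.restrict U)) {ψ : V → ℝ}
    (hψ : Continuous ψ) (hψc : HasCompactSupport ψ) (w : W) :
    ⟪w, ∫ x in U, ψ x • P x ∂μ⟫ = ∫ x in U, ⟪P x, ψ x • w⟫ ∂μ := by
  rw [← integral_inner ((hP.locallyIntegrable one_le_two).integrable_smul_left_of_hasCompactSupport
    hψ hψc)]
  simp [real_inner_smul_right, real_inner_comm]

theorem exists_hasL2LineDerivOn [FiniteDimensional ℝ W] (hu : MemLp u ⊤ μ) (hUo : IsOpen U)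
    (hU : μ U ≠ ⊤) {K : ℝ}
    (hK : ∀ᶠ t in 𝓝[≠] (0 : ℝ), ∫ x in U, ‖diffQuot v t u x‖ ^ 2 ∂μ ≤ K) :
    ∃ P, HasL2LineDerivOn μ v u P U := by
  have hmem (t : ℝ) := memLp_diffQuot hu hU v t
  have hnorm : ∀ᶠ t in 𝓝[≠] (0 : ℝ), ‖(hmem t).toLp (diffQuot v t u)‖ ≤ √K := by
    filter_upwards [hK] with t ht
    refine Real.le_sqrt_of_sq_le ?_
    rw [← real_inner_self_eq_norm_sq, inner_toLp]
    simpa using ht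
  have htest {ψ : V → ℝ} (hψ : ContDiff ℝ ∞ ψ) (hψc : HasCompactSupport ψ) (w : W) :
      MemLp (fun x ↦ ψ x • w) 2 (μ.restrict U) :=
    ((hψ.continuous.smul continuous_const).memLp_of_hasCompactSupport hψc.smul_right).restrict U
  let S : Set (Lp W 2 (μ.restrict U)) := {z | ∃ (ψ : V → ℝ) (w : W) (hψ : ContDiff ℝ ∞ ψ)
    (hψc : HasCompactSupport ψ), tsupport ψ ⊆ U ∧ z = (htest hψ hψc w).toLp _}
  have htendsto : ∀ z ∈ S, ∃ c,
      Tendsto (fun t ↦ ⟪(hmem t).toLp (diffQuot v t u), z⟫) (𝓝[≠] 0) (𝓝 c) := by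
    rintro _ ⟨ψ, w, hψ, hψc, hψU, rfl⟩
    simp only [inner_toLp]
    exact ⟨_, tendsto_setIntegral_inner_diffQuot (hu.locallyIntegrable le_top)
      (hψ.of_le (by simp)) hψc hψU v w⟩
  have htotal : ∀ y, (∀ z ∈ S, ⟪y, z⟫ = 0) → y = 0 := by
    intro y hy
    refine Lp.eq_zero_iff_ae_eq_zero.2 ((ae_restrict_iff' hUo.measurableSet).2 ?_)
    refine hUo.ae_eq_zero_of_integral_contDiff_smul_eq_zero
      (locallyIntegrableOn_of_memLp_two (Lp.memLp y)) fun ψ hψ hψc hψU ↦ ext_inner_left ℝ fun w ↦ ?_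
    rw [← setIntegral_smul_of_tsupport_subset hψU, inner_setIntegral_smul (Lp.memLp y)
      hψ.continuous hψc, ← inner_toLp (Lp.memLp y) (htest hψ hψc w), Lp.toLp_coeFn,
      hy _ ⟨ψ, w, hψ, hψc, hψU, rfl⟩, inner_zero_right]
  obtain ⟨P, hP⟩ := exists_forall_tendsto_inner hnorm htendsto htotal
  refine ⟨P, ⟨K, hK⟩, Lp.memLp P, fun Ψ hΨ ↦ ?_⟩
  have h := hP (hΨ.toLp Ψ)
  rw [← Lp.toLp_coeFn P (Lp.memLp P)] at h
  simpa only [inner_toLp] using h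

namespace HasL2LineDerivOn

theorem integral_smul_eq_neg [FiniteDimensional ℝ W] (h : HasL2LineDerivOn μ v u P U)
    (hu : LocallyIntegrable u μ) {ψ : V → ℝ} (hψ : ContDiff ℝ ∞ ψ) (hψc : HasCompactSupport ψ)
    (hψU : tsupport ψ ⊆ U) : ∫ x, ψ x • P x ∂μ = -∫ x, fderiv ℝ ψ x v • u x ∂μ := by
  have hψ1 : ContDiff ℝ 1 ψ := hψ.of_le (by simp)
  have htest (w : W) : MemLp (fun x ↦ ψ x • w) 2 (μ.restrict U) :=
    ((hψ.continuous.smul continuous_const).memLp_of_hasCompactSupport hψc.smul_right).restrict U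
  refine ext_inner_left ℝ fun w ↦ ?_
  rw [← setIntegral_smul_of_tsupport_subset hψU, inner_setIntegral_smul h.memLp hψ.continuous hψc,
    tendsto_nhds_unique (h.tendsto _ (htest w))
      (tendsto_setIntegral_inner_diffQuot hu hψ1 hψc hψU v w), inner_neg_right, ← integral_inner]
  · simp [real_inner_smul_right, real_inner_comm]
  · exact hu.integrable_smul_left_of_hasCompactSupport
      ((hψ1.continuous_fderiv one_ne_zero).clm_apply continuous_const) (hψc.fderiv_apply ℝ v)

theorem comm_of_lipschitzWith [FiniteDimensional ℝ W] {C : ℝ≥0} {Φ : V → W}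
    (hΦ : LipschitzWith C Φ) (hU : IsOpen U) {a : V} {P Q : V → W}
    (hP : HasL2LineDerivOn μ v (fun x ↦ fderiv ℝ Φ x a) P U)
    (hQ : HasL2LineDerivOn μ a (fun x ↦ fderiv ℝ Φ x v) Q U) :
    ∀ᵐ x ∂μ, x ∈ U → P x = Q x := by
  refine ae_eq_of_forall_integral_smul_eq hU (locallyIntegrableOn_of_memLp_two hP.memLp)
    (locallyIntegrableOn_of_memLp_two hQ.memLp) fun ψ hψ hψc hψU ↦ ?_
  have hψ2 : ContDiff ℝ 2 ψ := hψ.of_le (by norm_cast)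
  have hloc (w : V) := (memLp_top_fderiv_apply hΦ μ w).locallyIntegrable le_top
  have hdΦ {b w : V} : ∫ x, fderiv ℝ ψ x w • fderiv ℝ Φ x b ∂μ =
      -∫ x, fderiv ℝ (fun y ↦ fderiv ℝ ψ y w) x b • Φ x ∂μ := by
    rw [HasWeakFDerivOn.fderiv_of_lipschitzWith hΦ U _
      ((hψ.fderiv_right (by simp)).clm_apply contDiff_const) (hψc.fderiv_apply ℝ w)
      ((tsupport_fderiv_apply_subset ℝ w).trans hψU), neg_neg]
  rw [hP.integral_smul_eq_neg (hloc a) hψ hψc hψU, hQ.integral_smul_eq_neg (hloc v) hψ hψc hψU,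
    hdΦ, hdΦ]
  simp only [fderiv_fderiv_apply_comm hψ2 a v]

theorem integral_mul_inner_add_inner {a b A B : V → W}
    (hA : HasL2LineDerivOn μ v a A U) (hB : HasL2LineDerivOn μ v b B U) (ha : MemLp a ⊤ μ)
    (hb : MemLp b ⊤ μ) (hU : μ U ≠ ⊤) {ψ : V → ℝ} (hψ : ContDiff ℝ 1 ψ)
    (hψc : HasCompactSupport ψ) (hψU : tsupport ψ ⊆ U) :
    ∫ x, ψ x * (⟪A x, b x⟫ + ⟪a x, B x⟫) ∂μ = -∫ x, fderiv ℝ ψ x v * ⟪a x, b x⟫ ∂μ := by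
  have : IsFiniteMeasure (μ.restrict U) := ⟨by simpa using hU.lt_top⟩
  obtain ⟨M, hM⟩ := hψc.exists_bound_of_continuous hψ.continuous
  have hψ2 : MemLp ψ ⊤ μ := memLp_top_of_bound hψ.continuous.aestronglyMeasurable M (.of_forall hM)
  have hψa : MemLp (fun x ↦ ψ x • a x) 2 (μ.restrict U) :=
    ((ha.smul hψ2 (r := ⊤)).restrict U).mono_exponent le_top
  have hψb : MemLp (fun x ↦ ψ x • b x) 2 (μ.restrict U) :=
    ((hb.smul hψ2 (r := ⊤)).restrict U).mono_exponent le_top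
  have hab : MemLp (fun x ↦ ⟪a x, b x⟫) ⊤ μ := (innerSL ℝ).memLp_of_bilin ⊤ ha hb
  have hleft := tendsto_setIntegral_inner_diffQuot (hab.locallyIntegrable le_top) hψ hψc hψU v
    (1 : ℝ)
  have hright := ((hA.tendsto _ hψb).add (hB.tendsto _ hψa)).add
    (hA.tendsto_mul_setIntegral_inner_diffQuot hB ha hb hU hM)
  have hlim := tendsto_nhds_unique (hright.congr fun t ↦ (setIntegral_inner_diffQuot_inner
    hψ.continuous hM hψa hψb (memLp_diffQuot ha hU v t) (memLp_diffQuot hb hU v t)).symm) hleft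
  rw [add_zero, ← integral_add (integrable_inner_of_memLp_two hA.memLp hψb)
    (integrable_inner_of_memLp_two hB.memLp hψa)] at hlim
  have hsupp := setIntegral_smul_of_tsupport_subset (μ := μ) hψU
    fun x ↦ ⟪A x, b x⟫ + ⟪a x, B x⟫
  simp only [smul_eq_mul] at hsupp
  rw [← hsupp]
  simpa [real_inner_smul_right, ← mul_add, real_inner_comm] using hlim

theorem ae_inner_add_inner_eq {a b A B : V → W} {g : V → ℝ}
    (hA : HasL2LineDerivOn μ v a A U) (hB : HasL2LineDerivOn μ v b B U) (ha : MemLp a ⊤ μ)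
    (hb : MemLp b ⊤ μ) (hUo : IsOpen U) (hU : μ U ≠ ⊤) (hg : ContDiffOn ℝ 1 g U)
    (hab : ∀ᵐ x ∂μ, x ∈ U → ⟪a x, b x⟫ = g x) :
    ∀ᵐ x ∂μ, x ∈ U → ⟪A x, b x⟫ + ⟪a x, B x⟫ = fderiv ℝ g x v := by
  have hAb : MemLp (fun x ↦ ⟪A x, b x⟫) 2 (μ.restrict U) :=
    (innerSL ℝ).memLp_of_bilin 2 hA.memLp (hb.restrict U)
  have haB : MemLp (fun x ↦ ⟪a x, B x⟫) 2 (μ.restrict U) :=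
    (innerSL ℝ).memLp_of_bilin 2 (ha.restrict U) hB.memLp
  have hdg : ContinuousOn (fun x ↦ fderiv ℝ g x v) U :=
    (hg.continuousOn_fderiv_of_isOpen hUo le_rfl).clm_apply continuousOn_const
  refine ae_eq_of_forall_integral_smul_eq hUo (locallyIntegrableOn_of_memLp_two (hAb.add haB))
    (hdg.locallyIntegrableOn hUo.measurableSet) fun ψ hψ hψc hψU ↦ ?_
  have hψ1 : ContDiff ℝ 1 ψ := hψ.of_le (by simp)
  simp only [smul_eq_mul]
  rw [integral_mul_inner_add_inner hA hB ha hb hU hψ1 hψc hψU,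
    integral_mul_fderiv_of_contDiffOn hUo hg hψ1 hψc hψU]
  refine congrArg _ (integral_congr_ae ?_)
  filter_upwards [hab] with x hx
  by_cases hxU : x ∈ U
  · rw [hx hxU]
  · simp [fderiv_of_notMem_tsupport ℝ fun h ↦ hxU (hψU h)]

end HasL2LineDerivOn

end WeakLimit

section Christoffel

variable {V : Type*} [NormedAddCommGroup V] [NormedSpace ℝ V]

/-- The Christoffel symbols of the first kind of the metric `G`: `v`, `a`, `b` are sent to
`(∂_v G(a, b) + ∂_a G(v, b) - ∂_b G(v, a)) / 2`. -/
noncomputable def christoffelFirst (G : V → V →L[ℝ] V →L[ℝ] ℝ) (x : V) :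
    V →L[ℝ] V →L[ℝ] V →L[ℝ] ℝ :=
  (1 / 2 : ℝ) • (fderiv ℝ G x + (fderiv ℝ G x).flip -
    (ContinuousLinearMap.flipₗᵢ ℝ V V ℝ).toContinuousLinearEquiv.toContinuousLinearMap ∘L
      (fderiv ℝ G x).flip)

/-- The Christoffel symbols of the metric `G`, obtained from those of the first kind by raising
the last index. They are meaningful at the points where `G` is nondegenerate. -/
noncomputable def christoffel (G : V → V →L[ℝ] V →L[ℝ] ℝ) (x : V) : V →L[ℝ] V →L[ℝ] V :=
  ContinuousLinearMap.compL ℝ V (V →L[ℝ] ℝ) V (G x).inverse ∘L christoffelFirst G x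

variable {G : V → V →L[ℝ] V →L[ℝ] ℝ} {U : Set V} {n : WithTop ℕ∞}

theorem christoffelFirst_apply (G : V → V →L[ℝ] V →L[ℝ] ℝ) (x v a b : V) :
    christoffelFirst G x v a b =
      (fderiv ℝ G x v a b + fderiv ℝ G x a v b - fderiv ℝ G x b v a) / 2 := by
  simp [christoffelFirst]
  ring

theorem isInvertible_of_apply_self_pos [FiniteDimensional ℝ V] {B : V →L[ℝ] V →L[ℝ] ℝ}
    (hB : ∀ v ≠ 0, 0 < B v v) : B.IsInvertible := by
  have hinj : Function.Injective B := (injective_iff_map_eq_zero B).2 fun v hv ↦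
    by_contra fun hv0 ↦ (hB v hv0).ne' (by simp [hv])
  have hdim : Module.finrank ℝ V = Module.finrank ℝ (V →L[ℝ] ℝ) :=
    Subspace.dual_finrank_eq.symm.trans LinearMap.toContinuousLinearMap.finrank_eq
  exact ⟨(LinearEquiv.ofInjectiveOfFinrankEq (B : V →ₗ[ℝ] V →L[ℝ] ℝ) hinj
    hdim).toContinuousLinearEquiv, rfl⟩

theorem contDiffOn_christoffel [FiniteDimensional ℝ V] (hU : IsOpen U)
    (hG : ContDiffOn ℝ (n + 1) G U) (hpos : ∀ x ∈ U, ∀ v ≠ 0, 0 < G x v v) :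
    ContDiffOn ℝ n (christoffel G) U := by
  have hdG : ContDiffOn ℝ n (fderiv ℝ G) U := hG.fderiv_of_isOpen hU le_rfl
  have hflip : ContDiffOn ℝ n (fun x ↦ (fderiv ℝ G x).flip) U :=
    (ContinuousLinearMap.flipₗᵢ ℝ V V (V →L[ℝ] ℝ)).contDiff.comp_contDiffOn hdG
  have hfirst : ContDiffOn ℝ n (christoffelFirst G) U :=
    ((hdG.add hflip).sub (contDiffOn_const.clm_comp hflip)).const_smul _
  have hinv : ContDiffOn ℝ n (fun x ↦ (G x).inverse) U := fun x hx ↦ by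
    obtain ⟨e, he⟩ := isInvertible_of_apply_self_pos (hpos x hx)
    have : ContDiffAt ℝ n ContinuousLinearMap.inverse (G x) := he ▸ contDiffAt_map_inverse e
    exact this.comp_contDiffWithinAt x ((hG.of_le le_self_add) x hx)
  exact ((ContinuousLinearMap.compL ℝ V (V →L[ℝ] ℝ) V).contDiff.comp_contDiffOn hinv).clm_comp
    hfirst

end Christoffel

section Koszul

variable {V W : Type*} [NormedAddCommGroup V] [NormedSpace ℝ V] [FiniteDimensional ℝ V]
  [NormedAddCommGroup W] [InnerProductSpace ℝ W] [FiniteDimensional ℝ W]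

theorem eq_apply_inverse_of_forall_inner_eq {T : V →L[ℝ] W} {B : V →L[ℝ] V →L[ℝ] ℝ}
    (hdim : Module.finrank ℝ V = Module.finrank ℝ W) (hT : ∀ a b, ⟪T a, T b⟫ = B a b)
    (hB : ∀ v ≠ 0, 0 < B v v) {w : W} {l : V →L[ℝ] ℝ} (hw : ∀ b, ⟪w, T b⟫ = l b) :
    w = T (B.inverse l) := by
  have hinj : Function.Injective T := (injective_iff_map_eq_zero T).2 fun v hv ↦
    by_contra fun hv0 ↦ (hB v hv0).ne' (by simp [← hT, hv])
  have hsurj : Function.Surjective T :=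
    (LinearMap.injective_iff_surjective_of_finrank_eq_finrank hdim (f := (T : V →ₗ[ℝ] W))).1 hinj
  refine ext_inner_right ℝ fun z ↦ ?_
  obtain ⟨b, rfl⟩ := hsurj z
  rw [hw, hT, (isInvertible_of_apply_self_pos hB).self_apply_inverse]

variable [MeasurableSpace V] [BorelSpace V] {μ : Measure V} [μ.IsAddHaarMeasure]
  {G : V → V →L[ℝ] V →L[ℝ] ℝ} {U : Set V} {C : ℝ≥0} {Φ : V → W} {P : V → V → V → W}

theorem ae_inner_eq_christoffelFirst (hΦ : LipschitzWith C Φ) (hUo : IsOpen U) (hU : μ U ≠ ⊤)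
    (hGs : ContDiffOn ℝ 1 G U)
    (hG : ∀ᵐ x ∂μ, x ∈ U → ∀ a b, ⟪fderiv ℝ Φ x a, fderiv ℝ Φ x b⟫ = G x a b)
    (hP : ∀ v a, HasL2LineDerivOn μ v (fun x ↦ fderiv ℝ Φ x a) (P v a) U) (v a b : V) :
    ∀ᵐ x ∂μ, x ∈ U → ⟪P v a x, fderiv ℝ Φ x b⟫ = christoffelFirst G x v a b := by
  have hleibniz (v a b : V) : ∀ᵐ x ∂μ, x ∈ U →
      ⟪P v a x, fderiv ℝ Φ x b⟫ + ⟪fderiv ℝ Φ x a, P v b x⟫ = fderiv ℝ G x v a b := by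
    filter_upwards [(hP v a).ae_inner_add_inner_eq (hP v b) (memLp_top_fderiv_apply hΦ μ a)
      (memLp_top_fderiv_apply hΦ μ b) hUo hU
      ((hGs.clm_apply contDiffOn_const).clm_apply contDiffOn_const)
      (hG.mono fun x hx hxU ↦ hx hxU a b)] with x hx hxU
    have hGx : DifferentiableAt ℝ G x :=
      (hGs.differentiableOn one_ne_zero).differentiableAt (hUo.mem_nhds hxU)
    rw [hx hxU, fderiv_clm_apply (by fun_prop) (by fun_prop), fderiv_clm_apply hGx (by fun_prop)]
    simp
  have hcomm (v a : V) := (hP v a).comm_of_lipschitzWith hΦ hUo (hP a v)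
  filter_upwards [hleibniz v a b, hleibniz a v b, hleibniz b v a, hcomm v a, hcomm v b,
    hcomm a b] with x hva hav hbv hcva hcvb hcab hxU
  rw [christoffelFirst_apply, ← hva hxU, ← hav hxU, ← hbv hxU, hcva hxU, hcvb hxU, hcab hxU,
    real_inner_comm (fderiv ℝ Φ x a)]
  ring

theorem ae_eq_fderiv_christoffel (hΦ : LipschitzWith C Φ) (hUo : IsOpen U) (hU : μ U ≠ ⊤)
    (hdim : Module.finrank ℝ V = Module.finrank ℝ W) (hGs : ContDiffOn ℝ 1 G U)
    (hpos : ∀ x ∈ U, ∀ v ≠ 0, 0 < G x v v)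
    (hG : ∀ᵐ x ∂μ, x ∈ U → ∀ a b, ⟪fderiv ℝ Φ x a, fderiv ℝ Φ x b⟫ = G x a b)
    (hP : ∀ v a, HasL2LineDerivOn μ v (fun x ↦ fderiv ℝ Φ x a) (P v a) U) (v a : V) :
    ∀ᵐ x ∂μ, x ∈ U → P v a x = fderiv ℝ Φ x (christoffel G x v a) := by
  let e := Module.finBasis ℝ V
  filter_upwards [hG, ae_all_iff.2 fun i ↦
    ae_inner_eq_christoffelFirst hΦ hUo hU hGs hG hP v a (e i)] with x hGx hx hxU
  have hbasis : (innerSL ℝ (P v a x) ∘L fderiv ℝ Φ x : V →ₗ[ℝ] ℝ) = christoffelFirst G x v a :=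
    e.ext fun i ↦ hx i hxU
  exact eq_apply_inverse_of_forall_inner_eq hdim (hGx hxU) (hpos x hxU)
    fun b ↦ LinearMap.congr_fun hbasis b

theorem exists_hasL2LineDerivOn_fderiv_apply (hΦ : LipschitzWith C Φ) (hUo : IsOpen U)
    (hU : μ U ≠ ⊤) {v : V} {K : ℝ}
    (hK : ∀ᶠ t in 𝓝[≠] (0 : ℝ), ∫ x in U, ‖diffQuot v t (fderiv ℝ Φ) x‖ ^ 2 ∂μ ≤ K) (a : V) :
    ∃ P, HasL2LineDerivOn μ v (fun x ↦ fderiv ℝ Φ x a) P U := by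
  refine exists_hasL2LineDerivOn (memLp_top_fderiv_apply hΦ μ a) hUo hU (K := K * ‖a‖ ^ 2) ?_
  filter_upwards [hK] with t ht
  refine le_trans ?_ (mul_le_mul_of_nonneg_right ht (sq_nonneg _))
  rw [← integral_mul_const]
  refine integral_mono
    ((memLp_diffQuot (memLp_top_fderiv_apply hΦ μ a) hU v t).integrable_norm_pow two_ne_zero)
    (((memLp_diffQuot (memLp_top_fderiv hΦ μ) hU v t).integrable_norm_pow two_ne_zero).mul_const _)
    fun x ↦ ?_
  simp only [← mul_pow]
  gcongr
  exact (diffQuot v t (fderiv ℝ Φ) x).le_opNorm a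

theorem hasWeakFDerivOn_fderiv (hΦ : LipschitzWith C Φ) (hUo : IsOpen U) (hU : μ U ≠ ⊤)
    (hdim : Module.finrank ℝ V = Module.finrank ℝ W) (hGs : ContDiffOn ℝ 1 G U)
    (hpos : ∀ x ∈ U, ∀ v ≠ 0, 0 < G x v v)
    (hG : ∀ᵐ x ∂μ, x ∈ U → ∀ a b, ⟪fderiv ℝ Φ x a, fderiv ℝ Φ x b⟫ = G x a b)
    (hK : ∀ v, ∃ K, ∀ᶠ t in 𝓝[≠] (0 : ℝ), ∫ x in U, ‖diffQuot v t (fderiv ℝ Φ) x‖ ^ 2 ∂μ ≤ K) :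
    HasWeakFDerivOn μ (fderiv ℝ Φ)
      (fun x ↦ ContinuousLinearMap.compL ℝ V V W (fderiv ℝ Φ x) ∘L christoffel G x) U := by
  choose K hK using hK
  choose P hP using fun v a ↦ exists_hasL2LineDerivOn_fderiv_apply hΦ hUo hU (hK v) a
  intro ψ hψ hψc hψU v
  have hchris : LocallyIntegrableOn (fun x ↦ christoffel G x v) U μ :=
    ((contDiffOn_christoffel (n := 0) hUo (by simpa using hGs) hpos).continuousOn.clm_apply
      continuousOn_const).locallyIntegrableOn hUo.measurableSet
  have hint := integrable_smul_of_locallyIntegrableOn (locallyIntegrableOn_bilin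
    (ContinuousLinearMap.compL ℝ V V W) (memLp_top_fderiv hΦ μ) hchris) hψ.continuous hψc hψU
  have hint' : Integrable (fun x ↦ fderiv ℝ ψ x v • fderiv ℝ Φ x) μ :=
    ((memLp_top_fderiv hΦ μ).locallyIntegrable le_top).integrable_smul_left_of_hasCompactSupport
      ((hψ.continuous_fderiv (by simp)).clm_apply continuous_const) (hψc.fderiv_apply ℝ v)
  ext a
  rw [_root_.neg_apply, ContinuousLinearMap.integral_apply hint',
    ← neg_eq_iff_eq_neg]
  refine ((hP v a).integral_smul_eq_neg ((memLp_top_fderiv_apply hΦ μ a).locallyIntegrable le_top)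
    hψ hψc hψU).symm.trans ?_
  refine .trans (integral_congr_ae ?_) (ContinuousLinearMap.integral_apply hint a).symm
  filter_upwards [ae_eq_fderiv_christoffel hΦ hUo hU hdim hGs hpos hG hP v a] with x hx
  by_cases hxU : x ∈ U
  · simp [hx hxU]
  · simp [image_eq_zero_of_notMem_tsupport fun h ↦ hxU (hψU h)]

end Koszul

section Regularity

variable {V : Type*} [NormedAddCommGroup V] [NormedSpace ℝ V] [FiniteDimensional ℝ V]

theorem exists_pos_eventually_mul_norm_sq_le {X E : Type*} [TopologicalSpace X]
    [NormedAddCommGroup E] [NormedSpace ℝ E] [FiniteDimensional ℝ E] {B : X → E →L[ℝ] E →L[ℝ] ℝ}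
    {x₀ : X} (hB : ContinuousAt B x₀) (hpos : ∀ T ≠ 0, 0 < B x₀ T T) :
    ∃ c > 0, ∀ᶠ x in 𝓝 x₀, ∀ T, c * ‖T‖ ^ 2 ≤ B x T T := by
  have hcont : Continuous fun T ↦ B x₀ T T := by fun_prop
  obtain ⟨c, hc, hcB⟩ := (isCompact_sphere (0 : E) 1).exists_forall_le' hcont.continuousOn (a := 0)
    fun T hT ↦ hpos T (ne_of_mem_sphere hT one_ne_zero)
  have hc₀ (T : E) : c * ‖T‖ ^ 2 ≤ B x₀ T T := by
    rcases eq_or_ne T 0 with rfl | hT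
    · simp
    have h := hcB (‖T‖⁻¹ • T) (by simp [norm_smul, norm_ne_zero_iff.2 hT])
    have hT' := norm_pos_iff.2 hT
    simp only [map_smul, _root_.smul_apply, smul_eq_mul] at h
    field_simp at h
    linarith
  refine ⟨c / 2, half_pos hc, ?_⟩
  filter_upwards [hB.preimage_mem_nhds (ball_mem_nhds _ (half_pos hc))] with x hx T
  have hdiff := (le_abs_self _).trans ((B x₀ - B x).le_opNorm₂ T T)
  have hlt : ‖B x₀ - B x‖ ≤ c / 2 := by
    rw [norm_sub_rev]; exact (mem_ball_iff_norm.1 hx).le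
  have := hdiff.trans (mul_le_mul_of_nonneg_right (mul_le_mul_of_nonneg_right hlt (norm_nonneg T))
    (norm_nonneg T))
  simp only [_root_.sub_apply] at this
  linarith [hc₀ T, sq ‖T‖]

variable [MeasurableSpace V] [BorelSpace V] {μ : Measure V} [μ.IsAddHaarMeasure] {U : Set V}

theorem HasWeakFDerivOn.exists_contDiffOn_ae_eq {E : Type*} [NormedAddCommGroup E]
    [NormedSpace ℝ E] [FiniteDimensional ℝ E] {A : V → E →L[ℝ] V →L[ℝ] E} {u : V → E}
    (h : HasWeakFDerivOn μ u (fun x ↦ A x (u x)) U) (hU : IsOpen U) (hA : ContDiffOn ℝ ∞ A U)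
    (hum : AEStronglyMeasurable u μ) {M : ℝ} (hM : ∀ x, ‖u x‖ ≤ M) {x₀ : V} (hx₀ : x₀ ∈ U) :
    ∃ s > 0, ∃ w, Continuous w ∧ ContDiffOn ℝ ∞ w (ball x₀ s) ∧
      ∀ᵐ x ∂μ, x ∈ ball x₀ s → u x = w x := by
  obtain ⟨s, hs, hsU⟩ := nhds_basis_closedBall.mem_iff.1 (hU.mem_nhds hx₀)
  have hbU : ball x₀ s ⊆ U := ball_subset_closedBall.trans hsU
  obtain ⟨N, hN⟩ := (isCompact_closedBall x₀ s).exists_bound_of_continuousOn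
    (hA.continuousOn.mono hsU)
  let cut (w : V → E) : V → V →L[ℝ] E := (ball x₀ s).indicator fun x ↦ A x (w x)
  have hcut (w : V → E) {x : V} (hx : x ∈ ball x₀ s) : cut w x = A x (w x) :=
    indicator_of_mem hx _
  have hbound (x : V) : ‖cut u x‖ ≤ N * M := by
    by_cases hx : x ∈ ball x₀ s
    · rw [hcut u hx]
      exact (A x).le_of_opNorm_le_of_le (hN x (ball_subset_closedBall hx)) (hM x)
    · simpa [cut, hx] using mul_nonneg ((norm_nonneg _).trans (hN x₀ (mem_closedBall_self hs.le)))
        ((norm_nonneg _).trans (hM x))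
  have hmeas : AEStronglyMeasurable (cut u) μ :=
    (aestronglyMeasurable_indicator_iff measurableSet_ball).2
      ((ContinuousLinearMap.id ℝ _).aestronglyMeasurable_comp₂
        ((hA.continuousOn.mono hbU).aestronglyMeasurable measurableSet_ball) hum.restrict)
  obtain ⟨C, w, hw, huw⟩ := ((h.mono hbU).congr_ae (.of_forall fun x _ ↦ rfl)
    (.of_forall fun x hx ↦ (hcut u hx).symm)).exists_lipschitzWith_ae_eq
      (locallyIntegrable_of_norm_le hum hM) hmeas hbound
  have hwloc : LocallyIntegrable (cut w) μ := Integrable.locallyIntegrable <|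
    (integrable_indicator_iff measurableSet_ball).2 <|
      (((hA.continuousOn.mono hsU).clm_apply hw.continuous.continuousOn).integrableOn_compact
        (isCompact_closedBall x₀ s)).mono_set ball_subset_closedBall
  have hweak : HasWeakFDerivOn μ w (cut w) (ball x₀ s) := (h.mono hbU).congr_ae huw <| by
    filter_upwards [huw] with x hx hxs
    rw [hcut w hxs, hx hxs]
  refine ⟨s, hs, w, hw.continuous, ?_, huw⟩
  exact hweak.contDiffOn_of_bootstrap isOpen_ball hw.continuous hwloc fun n hwn ↦
    (((hA.mono hbU).of_le (by exact_mod_cast le_top)).clm_apply hwn).congr fun x hx ↦ hcut w hx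

variable {W : Type*} [NormedAddCommGroup W]

theorem contDiffAt_of_hasWeakFDerivOn_fderiv [NormedSpace ℝ W]
    [FiniteDimensional ℝ W] {C : ℝ≥0} {Φ : V → W} (hΦ : LipschitzWith C Φ)
    {A : V → (V →L[ℝ] W) →L[ℝ] V →L[ℝ] V →L[ℝ] W} (hU : IsOpen U) (hA : ContDiffOn ℝ ∞ A U)
    (h : HasWeakFDerivOn μ (fderiv ℝ Φ) (fun x ↦ A x (fderiv ℝ Φ x)) U) {x₀ : V} (hx₀ : x₀ ∈ U) :
    ContDiffAt ℝ ∞ Φ x₀ := by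
  obtain ⟨s, hs, w, hw, hws, hΦw⟩ := h.exists_contDiffOn_ae_eq hU hA
    (aestronglyMeasurable_fderiv μ Φ) (fun _ ↦ norm_fderiv_le_of_lipschitz ℝ hΦ) hx₀
  have hweak : HasWeakFDerivOn μ Φ w (ball x₀ s) :=
    (HasWeakFDerivOn.fderiv_of_lipschitzWith hΦ _).congr_ae (.of_forall fun _ _ ↦ rfl) hΦw
  have hd {x : V} (hx : x ∈ ball x₀ s) : HasFDerivAt Φ (w x) x :=
    hweak.hasFDerivAt isOpen_ball hΦ.continuous hw.locallyIntegrable hx hw.continuousAt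
  have : ContDiffOn ℝ ∞ Φ (ball x₀ s) := (contDiffOn_infty_iff_fderiv_of_isOpen isOpen_ball).2
    ⟨fun x hx ↦ (hd hx).differentiableAt.differentiableWithinAt,
      hws.congr fun x hx ↦ (hd hx).fderiv⟩
  exact this.contDiffAt (ball_mem_nhds x₀ hs)

variable [InnerProductSpace ℝ W] [FiniteDimensional ℝ W] {C : ℝ≥0} {Φ : V → W}
  {B : V → (V →L[ℝ] W) →L[ℝ] (V →L[ℝ] W) →L[ℝ] ℝ} {x₀ : V}

theorem exists_eventually_setIntegral_norm_sq_diffQuot_le {L : ℝ≥0} {r c : ℝ}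
    (hsol : IsWeakSolutionOn μ B Φ (closedBall x₀ (3 * r))) (hr : 0 < r) (hB : LipschitzWith L B)
    (hΦ : LipschitzWith C Φ) (hc : 0 < c)
    (hBc : ∀ x ∈ closedBall x₀ (3 * r), ∀ T, c * ‖T‖ ^ 2 ≤ B x T T) (v : V) :
    ∃ K, ∀ᶠ t in 𝓝[≠] (0 : ℝ),
      ∫ x in ball x₀ r, ‖diffQuot v t (fderiv ℝ Φ) x‖ ^ 2 ∂μ ≤ K := by
  obtain ⟨K, hK⟩ := hsol.exists_setIntegral_norm_sq_fderiv_sub_le hr hB hΦ hc hBc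
  refine ⟨K * ‖v‖ ^ 2, ?_⟩
  have hsmall : ∀ᶠ t in 𝓝 (0 : ℝ), ‖t • v‖ < r :=
    ContinuousAt.eventually_lt (by fun_prop) continuousAt_const (by simpa)
  filter_upwards [hsmall.filter_mono nhdsWithin_le_nhds, self_mem_nhdsWithin] with t ht ht0
  have hint : IntegrableOn (fun x ↦ ‖diffQuot v t (fderiv ℝ Φ) x‖ ^ 2) (closedBall x₀ r) μ :=
    (memLp_diffQuot (memLp_top_fderiv hΦ μ) measure_closedBall_lt_top.ne v t).integrable_norm_pow
      two_ne_zero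
  calc ∫ x in ball x₀ r, ‖diffQuot v t (fderiv ℝ Φ) x‖ ^ 2 ∂μ
    _ ≤ ∫ x in closedBall x₀ r, ‖diffQuot v t (fderiv ℝ Φ) x‖ ^ 2 ∂μ :=
      setIntegral_mono_set hint (.of_forall fun _ ↦ sq_nonneg _)
        ball_subset_closedBall.eventuallyLE
    _ = (t ^ 2)⁻¹ *
        ∫ x in closedBall x₀ r, ‖fderiv ℝ Φ (x + t • v) - fderiv ℝ Φ x‖ ^ 2 ∂μ := by
      simp [← integral_const_mul, diffQuot, norm_smul, mul_pow]
    _ ≤ (t ^ 2)⁻¹ * (K * ‖t • v‖ ^ 2) := by gcongr; exact hK _ ht.le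
    _ = K * ‖v‖ ^ 2 := by
      have : t ≠ 0 := ht0
      rw [norm_smul, mul_pow, Real.norm_eq_abs, sq_abs]
      field_simp

variable {G : V → V →L[ℝ] V →L[ℝ] ℝ}

theorem contDiffAt_of_isometric_of_bound (hΦ : LipschitzWith C Φ) (hUo : IsOpen U) (hU : μ U ≠ ⊤)
    (hdim : Module.finrank ℝ V = Module.finrank ℝ W) (hGs : ContDiffOn ℝ ∞ G U)
    (hpos : ∀ x ∈ U, ∀ v ≠ 0, 0 < G x v v)
    (hG : ∀ᵐ x ∂μ, x ∈ U → ∀ a b, ⟪fderiv ℝ Φ x a, fderiv ℝ Φ x b⟫ = G x a b)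
    (hK : ∀ v, ∃ K, ∀ᶠ t in 𝓝[≠] (0 : ℝ), ∫ x in U, ‖diffQuot v t (fderiv ℝ Φ) x‖ ^ 2 ∂μ ≤ K)
    (hx₀ : x₀ ∈ U) : ContDiffAt ℝ ∞ Φ x₀ := by
  let comp := ContinuousLinearMap.compL ℝ V (V →L[ℝ] V) (V →L[ℝ] W)
  refine contDiffAt_of_hasWeakFDerivOn_fderiv hΦ hUo
    (A := fun x ↦ comp.flip (christoffel G x) ∘L ContinuousLinearMap.compL ℝ V V W) ?_
    (hasWeakFDerivOn_fderiv hΦ hUo hU hdim (hGs.of_le (by simp)) hpos hG hK) hx₀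
  exact (comp.flip.contDiff.comp_contDiffOn
    (contDiffOn_christoffel hUo (hGs.of_le (by simp)) hpos)).clm_comp contDiffOn_const

theorem contDiffAt_of_isometric_of_isWeakSolutionOn (hΦ : LipschitzOnWith C Φ U)
    (hU : U ∈ 𝓝 x₀) (hdim : Module.finrank ℝ V = Module.finrank ℝ W) (hGs : ContDiffOn ℝ ∞ G U)
    (hpos : ∀ x ∈ U, ∀ v ≠ 0, 0 < G x v v)
    (hG : ∀ᵐ x ∂μ, x ∈ U → ∀ a b, ⟪fderiv ℝ Φ x a, fderiv ℝ Φ x b⟫ = G x a b)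
    (hBs : ContDiffAt ℝ 1 B x₀) (hBpos : ∀ T ≠ 0, 0 < B x₀ T T)
    (hsol : IsWeakSolutionOn μ B Φ U) : ContDiffAt ℝ ∞ Φ x₀ := by
  obtain ⟨c, hc, hBc⟩ := exists_pos_eventually_mul_norm_sq_le hBs.continuousAt hBpos
  obtain ⟨L, N, hN, hBL⟩ := hBs.exists_lipschitzOnWith
  obtain ⟨Bₑ, hBₑ, hBBₑ⟩ := hBL.extend_finite_dimension
  obtain ⟨Φₑ, hΦₑ, hΦΦₑ⟩ := hΦ.extend_finite_dimension
  obtain ⟨R, hR, hRsub⟩ := nhds_basis_ball.mem_iff.1 (inter_mem (inter_mem hU hN) hBc)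
  have hR3 : 0 < R / 4 := by positivity
  have hsub : closedBall x₀ (3 * (R / 4)) ⊆ ball x₀ R := closedBall_subset_ball (by linarith)
  have hballU : ball x₀ R ⊆ U := fun x hx ↦ (hRsub hx).1.1
  have hsmall : ball x₀ (R / 4) ⊆ ball x₀ R := ball_subset_ball (by linarith)
  have hsolₑ : IsWeakSolutionOn μ Bₑ Φₑ (closedBall x₀ (3 * (R / 4))) :=
    (((hsol.mono hballU).congr_fun isOpen_ball (hΦΦₑ.mono hballU)).congr
      (hBBₑ.mono fun x hx ↦ (hRsub hx).1.2)).mono hsub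
  have hBcₑ : ∀ x ∈ closedBall x₀ (3 * (R / 4)), ∀ T, c * ‖T‖ ^ 2 ≤ Bₑ x T T := fun x hx ↦ by
    rw [← hBBₑ (hRsub (hsub hx)).1.2]
    exact (hRsub (hsub hx)).2
  have hGₑ : ∀ᵐ x ∂μ, x ∈ ball x₀ (R / 4) →
      ∀ a b, ⟪fderiv ℝ Φₑ x a, fderiv ℝ Φₑ x b⟫ = G x a b := hG.mono fun x hx hxs ↦ by
    rw [← (hΦΦₑ.eventuallyEq_of_mem (mem_of_superset (isOpen_ball.mem_nhds hxs)
      (hsmall.trans hballU))).fderiv_eq]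
    exact hx (hballU (hsmall hxs))
  exact (contDiffAt_of_isometric_of_bound hΦₑ isOpen_ball measure_ball_lt_top.ne hdim
    (hGs.mono (hsmall.trans hballU)) (fun x hx ↦ hpos x (hballU (hsmall hx))) hGₑ
    (exists_eventually_setIntegral_norm_sq_diffQuot_le hsolₑ hR3 hBₑ hΦₑ hc hBcₑ)
    (mem_ball_self hR3)).congr_of_eventuallyEq (hΦΦₑ.eventuallyEq_of_mem hU)

end Regularity

section MatrixFields

variable {V ι : Type*} [NormedAddCommGroup V] [NormedSpace ℝ V] [Fintype ι] [DecidableEq ι]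
  {U : Set V} {G : V → Matrix ι ι ℝ} {n : WithTop ℕ∞}

theorem contDiffOn_matrix_det (hG : ∀ i j, ContDiffOn ℝ n (fun x ↦ G x i j) U) :
    ContDiffOn ℝ n (fun x ↦ (G x).det) U := by
  simp only [det_apply]
  exact ContDiffOn.sum fun σ _ ↦ (contDiffOn_prod fun i _ ↦ hG _ _).const_smul _

theorem contDiffOn_matrix_adjugate (hG : ∀ i j, ContDiffOn ℝ n (fun x ↦ G x i j) U) (i j : ι) :
    ContDiffOn ℝ n (fun x ↦ (G x).adjugate i j) U := by
  simp only [adjugate_apply]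
  refine contDiffOn_matrix_det fun k l ↦ ?_
  simp only [updateRow_apply]
  split_ifs
  exacts [contDiffOn_const, hG k l]

theorem contDiffOn_matrix_inv (hG : ∀ i j, ContDiffOn ℝ n (fun x ↦ G x i j) U)
    (hdet : ∀ x ∈ U, (G x).det ≠ 0) (i j : ι) : ContDiffOn ℝ n (fun x ↦ (G x)⁻¹ i j) U := by
  simp only [inv_def, Matrix.smul_apply, Ring.inverse_eq_inv', smul_eq_mul]
  exact ((contDiffOn_matrix_det hG).inv hdet).mul (contDiffOn_matrix_adjugate hG i j)

end MatrixFields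

section MatrixForm

variable {ι E F : Type*} [Fintype ι] [NormedAddCommGroup F] [InnerProductSpace ℝ F]

open scoped MatrixOrder Matrix.Norms.L2Operator in
theorem sum_sum_mul_inner_pos {A : Matrix ι ι ℝ} (hA : A.PosDef) {w : ι → F} (hw : w ≠ 0) :
    0 < ∑ i, ∑ j, A i j * ⟪w j, w i⟫ := by
  classical
  obtain ⟨D, hD, rfl⟩ :=
    CStarAlgebra.isStrictlyPositive_iff_eq_star_mul_self.1 hA.isStrictlyPositive
  have hsq : ∑ i, ∑ j, (star D * D) i j * ⟪w j, w i⟫ = ∑ k, ‖∑ i, D k i • w i‖ ^ 2 := by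
    simp only [← real_inner_self_eq_norm_sq, sum_inner, inner_sum, real_inner_smul_left,
      real_inner_smul_right, mul_apply, star_apply, star_trivial, Finset.sum_mul]
    rw [Finset.sum_comm_cycle]
    simp only [mul_assoc]
  have hw' (i : ι) : ∑ k, D⁻¹ i k • ∑ j, D k j • w j = w i := by
    simp only [Finset.smul_sum, smul_smul]
    rw [Finset.sum_comm]
    simp [← Finset.sum_smul, ← mul_apply, nonsing_inv_mul D ((isUnit_iff_isUnit_det D).1 hD),
      one_apply]
  rw [hsq]
  refine Finset.sum_pos' (fun _ _ ↦ sq_nonneg _) ?_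
  by_contra! h
  refine hw (funext fun i ↦ ?_)
  rw [← hw' i]
  simp [fun k ↦ norm_eq_zero.1 (pow_eq_zero_iff two_ne_zero |>.1 <|
    (h k (Finset.mem_univ k)).antisymm (sq_nonneg _))]

variable [NormedAddCommGroup E] [NormedSpace ℝ E]

/-- The bilinear form `(x, y) ↦ ∑ i j, A i j ⟪ℓ j x, ℓ i y⟫` with coefficient matrix `A` in the
components `ℓ`. -/
noncomputable def matrixForm (ℓ : ι → E →L[ℝ] F) (A : Matrix ι ι ℝ) : E →L[ℝ] E →L[ℝ] ℝ :=
  ∑ i, ∑ j, A i j • (innerSL ℝ).bilinearComp (ℓ j) (ℓ i)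

theorem matrixForm_apply (ℓ : ι → E →L[ℝ] F) (A : Matrix ι ι ℝ) (x y : E) :
    matrixForm ℓ A x y = ∑ i, ∑ j, A i j * ⟪ℓ j x, ℓ i y⟫ := by
  simp [matrixForm]

theorem contDiffOn_matrixForm {V : Type*} [NormedAddCommGroup V] [NormedSpace ℝ V] {U : Set V}
    {A : V → Matrix ι ι ℝ} {n : WithTop ℕ∞} (hA : ∀ i j, ContDiffOn ℝ n (fun x ↦ A x i j) U)
    (ℓ : ι → E →L[ℝ] F) : ContDiffOn ℝ n (fun x ↦ matrixForm ℓ (A x)) U :=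
  .sum fun i _ ↦ .sum fun j _ ↦ (hA i j).smul contDiffOn_const

theorem matrixForm_self_pos {ℓ : ι → E →L[ℝ] F} {A : Matrix ι ι ℝ} (hA : A.PosDef) {x : E}
    (hx : ∃ i, ℓ i x ≠ 0) : 0 < matrixForm ℓ A x x := by
  rw [matrixForm_apply]
  exact sum_sum_mul_inner_pos hA (Function.ne_iff.2 hx)

theorem matrixForm_gram_apply [FiniteDimensional ℝ E] (e : Module.Basis ι ℝ E) (T : E →L[ℝ] F)
    (x y : E) :
    matrixForm (fun i ↦ (e.coord i).toContinuousLinearMap) (gram ℝ fun j ↦ T (e j)) x y =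
      ⟪T x, T y⟫ := by
  nth_rw 2 [← e.sum_repr x, ← e.sum_repr y]
  simp only [matrixForm_apply, gram_apply, map_sum, map_smul, sum_inner, inner_sum,
    real_inner_smul_left, real_inner_smul_right]
  refine Finset.sum_congr rfl fun i _ ↦ Finset.sum_congr rfl fun j _ ↦ ?_
  rw [real_inner_comm]
  simpa using by ring

end MatrixForm

section OrientedIsometry

variable {ι V W : Type*} [Fintype ι] [DecidableEq ι] [NormedAddCommGroup W]

/-- The determinant with respect to a basis, as a continuous alternating form. -/
noncomputable def continuousDet [NormedSpace ℝ W] [FiniteDimensional ℝ W]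
    (b : Module.Basis ι ℝ W) : W [⋀^ι]→L[ℝ] ℝ :=
  { b.det with
    cont := Continuous.matrix_det <| continuous_matrix fun i _ ↦
      (b.coord i).continuous_of_finiteDimensional.comp (continuous_apply _) }

variable [InnerProductSpace ℝ W] (b : OrthonormalBasis ι ℝ W)

section Frame

variable (F : ι → W)

theorem sqrt_det_gram (hF : 0 < b.toBasis.det F) :
    Real.sqrt (gram ℝ F).det = b.toBasis.det F := by
  rw [gram_eq_conjTranspose_mul b, det_mul, conjTranspose_eq_transpose_of_trivial, det_transpose]
  exact Real.sqrt_mul_self hF.le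

theorem det_update_eq_sum_inner (hF : 0 < b.toBasis.det F) (i : ι) (w : W) :
    b.toBasis.det (Function.update F i w) =
      ∑ j, (Real.sqrt (gram ℝ F).det • (gram ℝ F)⁻¹) i j * ⟪F j, w⟫ := by
  set E : Matrix ι ι ℝ := b.toBasis.toMatrix F with hE
  set c := cramer E (b.repr w).ofLp
  have hgram : gram ℝ F = Eᵀ * E := by
    rw [gram_eq_conjTranspose_mul b, conjTranspose_eq_transpose_of_trivial]; rfl
  have hinner : Eᵀ *ᵥ (b.repr w).ofLp = fun j ↦ ⟪F j, w⟫ := by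
    ext j
    rw [← b.sum_inner_mul_inner]
    simp [hE, mulVec, dotProduct, Module.Basis.toMatrix_apply, b.repr_apply_apply, real_inner_comm]
  have hc : gram ℝ F *ᵥ c = E.det • fun j ↦ ⟪F j, w⟫ := by
    rw [hgram, ← mulVec_mulVec, mulVec_cramer, mulVec_smul, hinner]
  have hunit : IsUnit (gram ℝ F).det := by
    rw [hgram, det_mul, det_transpose]
    exact (mul_pos hF hF).ne'.isUnit
  calc b.toBasis.det (Function.update F i w) = c i := by
        rw [Module.Basis.det_apply, Module.Basis.toMatrix_update]; rfl
    _ = ((gram ℝ F)⁻¹ *ᵥ (gram ℝ F *ᵥ c)) i := by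
      rw [mulVec_mulVec, nonsing_inv_mul _ hunit, one_mulVec]
    _ = _ := by
      rw [hc, sqrt_det_gram b F hF, mulVec_smul, ← smul_mulVec]; rfl

end Frame

variable [NormedAddCommGroup V] [NormedSpace ℝ V] (e : ι → V) {G : V → Matrix ι ι ℝ}

/-- The bilinear form `(T, S) ↦ √(det A) ∑ i j, (A⁻¹) i j ⟪T (e j), S (e i)⟫` on linear maps: the
energy density of the metric whose matrix in the frame `e` is `A`. -/
noncomputable def energyForm (A : Matrix ι ι ℝ) : (V →L[ℝ] W) →L[ℝ] (V →L[ℝ] W) →L[ℝ] ℝ :=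
  matrixForm (fun i ↦ ContinuousLinearMap.apply ℝ W (e i)) (Real.sqrt A.det • A⁻¹)

theorem cofactorPairing_eq_energyForm [FiniteDimensional ℝ W] {T : V →L[ℝ] W}
    (hT : 0 < b.toBasis.det fun j ↦ T (e j)) (S : V →L[ℝ] W) :
    cofactorPairing (continuousDet b.toBasis) e T S =
      energyForm e (gram ℝ fun j ↦ T (e j)) T S := by
  rw [energyForm, matrixForm_apply]
  exact Finset.sum_congr rfl fun i _ ↦ det_update_eq_sum_inner b _ hT i (S (e i))

theorem contDiffOn_energyForm {U : Set V} {n : WithTop ℕ∞}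
    (hG : ∀ i j, ContDiffOn ℝ n (fun x ↦ G x i j) U) (hGpd : ∀ x ∈ U, (G x).PosDef) :
    ContDiffOn ℝ n (fun x ↦ energyForm (W := W) e (G x)) U := by
  have hdet : ∀ x ∈ U, (G x).det ≠ 0 := fun x hx ↦ (hGpd x hx).det_pos.ne'
  exact contDiffOn_matrixForm (fun i j ↦
    ((contDiffOn_matrix_det hG).sqrt hdet).mul (contDiffOn_matrix_inv hG hdet i j)) _

variable [FiniteDimensional ℝ V] [MeasurableSpace V] [BorelSpace V] {μ : Measure V}
  [μ.IsAddHaarMeasure] {U : Set V} {C : ℝ≥0} {Φ : V → W}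

theorem isWeakSolutionOn_energyForm (hU : IsOpen U) (hΦ : LipschitzOnWith C Φ U)
    (hgram : ∀ᵐ x ∂μ, x ∈ U → gram ℝ (fun j ↦ fderiv ℝ Φ x (e j)) = G x)
    (hdet : ∀ᵐ x ∂μ, x ∈ U → 0 < b.toBasis.det fun j ↦ fderiv ℝ Φ x (e j)) :
    IsWeakSolutionOn μ (fun x ↦ energyForm e (G x)) Φ U := by
  have := b.toBasis.finiteDimensional_of_finite
  obtain ⟨Φₑ, hΦₑ, hΦΦₑ⟩ := hΦ.extend_finite_dimension
  refine IsWeakSolutionOn.congr_fun (f := Φₑ) (fun D φ hφ hφc hφU ↦ ?_) hU hΦΦₑ.symm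
  rw [← integral_cofactorPairing_fderiv_of_lipschitzWith (μ := μ) (continuousDet b.toBasis) e
    hΦₑ hφ hφc]
  refine integral_congr_ae ?_
  filter_upwards [hgram, hdet] with x hgx hdx
  by_cases hx : x ∈ tsupport φ
  · rw [← (hΦΦₑ.eventuallyEq_of_mem (hU.mem_nhds (hφU hx))).fderiv_eq,
      cofactorPairing_eq_energyForm b e (hdx (hφU hx)), hgx (hφU hx)]
  · simp [fderiv_of_notMem_tsupport ℝ hx, cofactorPairing_zero]

theorem contDiffOn_of_gram_eq (e : Module.Basis ι ℝ V) (hU : IsOpen U)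
    (hΦ : LipschitzOnWith C Φ U) (hG : ∀ i j, ContDiffOn ℝ ∞ (fun x ↦ G x i j) U)
    (hGpd : ∀ x ∈ U, (G x).PosDef)
    (hgram : ∀ᵐ x ∂μ, x ∈ U → gram ℝ (fun j ↦ fderiv ℝ Φ x (e j)) = G x)
    (hdet : ∀ᵐ x ∂μ, x ∈ U → 0 < b.toBasis.det fun j ↦ fderiv ℝ Φ x (e j)) :
    ContDiffOn ℝ ∞ Φ U := by
  have := b.toBasis.finiteDimensional_of_finite
  intro x₀ hx₀
  have exists_coord_ne {v : V} (hv : v ≠ 0) : ∃ i, e.coord i v ≠ 0 := by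
    by_contra! h
    exact hv (e.forall_coord_eq_zero_iff.1 h)
  have exists_apply_ne {T : V →L[ℝ] W} (hT : T ≠ 0) : ∃ i, T (e i) ≠ 0 := by
    by_contra! h
    exact hT (ContinuousLinearMap.coe_injective (e.ext h))
  refine (contDiffAt_of_isometric_of_isWeakSolutionOn hΦ (hU.mem_nhds hx₀)
    ((Module.finrank_eq_card_basis e).trans (Module.finrank_eq_card_basis b.toBasis).symm)
    (contDiffOn_matrixForm hG fun i ↦ (e.coord i).toContinuousLinearMap)
    (fun x hx v hv ↦ matrixForm_self_pos (hGpd x hx) (exists_coord_ne hv)) ?_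
    ((contDiffOn_energyForm e (fun i j ↦ (hG i j).of_le (by simp)) hGpd).contDiffAt
      (hU.mem_nhds hx₀)) (fun T hT ↦ matrixForm_self_pos
        ((hGpd x₀ hx₀).inv.smul (Real.sqrt_pos.2 (hGpd x₀ hx₀).det_pos)) (exists_apply_ne hT))
    (isWeakSolutionOn_energyForm b e hU hΦ hgram hdet)).contDiffWithinAt
  filter_upwards [hgram] with x hx hxU v w
  rw [← hx hxU, matrixForm_gram_apply]

end OrientedIsometry

section NormalExtension

variable {V W : Type*} [NormedAddCommGroup V] [NormedAddCommGroup W] [NormedSpace ℝ W]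
  {f v : V → W}

/-- The extension `(x, t) ↦ f x + t • v x` of a hypersurface `f` along its normal field `v`. -/
def normalExtension (f v : V → W) (p : V × ℝ) : W :=
  f p.1 + p.2 • v p.1

theorem exists_lipschitzOnWith_normalExtension {Cf Cv : ℝ≥0} {Ω : Set V}
    (hf : LipschitzOnWith Cf f Ω) (hv : LipschitzOnWith Cv v Ω) {p : V × ℝ} (hp : Ω ∈ 𝓝 p.1) :
    ∃ C, ∃ U ∈ 𝓝 p, LipschitzOnWith C (normalExtension f v) U := by
  have hΩ : Prod.fst ⁻¹' Ω ∈ 𝓝 p := continuous_fst.continuousAt hp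
  have hfst : LipschitzOnWith 1 (Prod.fst : V × ℝ → V) (Prod.fst ⁻¹' Ω) :=
    LipschitzWith.prod_fst.lipschitzOnWith
  have hA := (hf.comp hfst (mapsTo_preimage _ _)).prodMk
    ((hv.comp hfst (mapsTo_preimage _ _)).prodMk LipschitzWith.prod_snd.lipschitzOnWith)
  obtain ⟨C, s, hs, hC⟩ := ContDiffAt.exists_lipschitzOnWith (x := (f p.1, v p.1, p.2)) (𝕂 := ℝ)
    (f := fun q : W × W × ℝ ↦ q.1 + q.2.2 • q.2.1) (by fun_prop)
  exact ⟨_, _, inter_mem hΩ ((hA.continuousOn.continuousAt hΩ).preimage_mem_nhds hs),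
    hC.comp (hA.mono inter_subset_left) fun q hq ↦ hq.2⟩

variable [NormedSpace ℝ V]

theorem fderiv_normalExtension_apply {p : V × ℝ} (hf : DifferentiableAt ℝ f p.1)
    (hv : DifferentiableAt ℝ v p.1) (q : V × ℝ) :
    fderiv ℝ (normalExtension f v) p q =
      fderiv ℝ f p.1 q.1 + p.2 • fderiv ℝ v p.1 q.1 + q.2 • v p.1 := by
  have h := (hf.hasFDerivAt.comp p hasFDerivAt_fst).add
    (hasFDerivAt_snd.smul (hv.hasFDerivAt.comp p hasFDerivAt_fst))
  rw [show fderiv ℝ (normalExtension f v) p = _ from h.fderiv]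
  simp [add_assoc]

theorem contDiffAt_of_contDiffAt_normalExtension {x : V} {n : WithTop ℕ∞}
    (h : ContDiffAt ℝ n (normalExtension f v) (x, 0)) : ContDiffAt ℝ n f x := by
  have : f = normalExtension f v ∘ fun x ↦ (x, 0) := by ext; simp [normalExtension]
  rw [this]
  exact h.comp x (by fun_prop)

theorem contDiffAt_normal_of_contDiffAt_normalExtension {x : V}
    (h : ContDiffAt ℝ ∞ (normalExtension f v) (x, 0)) : ContDiffAt ℝ ∞ v x := by
  have hderiv : ContDiffAt ℝ ∞ (fun y ↦ fderiv ℝ (normalExtension f v) (y, 0) (0, 1)) x :=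
    ((h.fderiv_right le_rfl).comp x (f := fun y ↦ (y, (0 : ℝ))) (by fun_prop)).clm_apply
      contDiffAt_const
  have hdiff : ∀ᶠ y in 𝓝 x, DifferentiableAt ℝ (normalExtension f v) (y, 0) :=
    (Continuous.prodMk_left (0 : ℝ)).continuousAt.eventually <|
      ((h.of_le (by simp)).eventually (n := 1) (by simp)).mono
        fun _ hp ↦ hp.differentiableAt one_ne_zero
  refine hderiv.congr_of_eventuallyEq (hdiff.mono fun y hy ↦ ?_)
  have hline : HasLineDerivAt ℝ (normalExtension f v) (v y) (y, 0) (0, 1) := by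
    simpa [HasLineDerivAt, normalExtension] using
      ((hasDerivAt_id (0 : ℝ)).smul_const (v y)).const_add (f y)
  exact hline.unique (hy.hasFDerivAt.hasLineDerivAt _)

end NormalExtension

section Columns

variable {m d : ℕ} {ι : Type*}

theorem gram_toLp_col (A : Matrix (Fin m) ι ℝ) :
    gram ℝ (fun j ↦ WithLp.toLp 2 (A.col j)) = Aᵀ * A := by
  ext i j
  simp [gram_apply, mul_apply, PiLp.inner_apply, mul_comm]

theorem juxtCol_eq_submatrix (F : Matrix (Fin m) (Fin d) ℝ) (w : Fin m → ℝ) :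
    juxtCol F w =
      (fromCols F (replicateCol (Fin 1) w)).submatrix id finSumFinEquiv.symm := by
  ext i j
  refine Fin.lastCases ?_ (fun j ↦ ?_) j
  · simp [juxtCol]
  · simp [juxtCol]

theorem transpose_fromCols_mul_fromCols_of_unit_normal {F : Matrix (Fin m) ι ℝ}
    {w : Fin m → ℝ} (hFw : Fᵀ *ᵥ w = 0) (hw : vecNorm w = 1) :
    (fromCols F (replicateCol (Fin 1) w))ᵀ * fromCols F (replicateCol (Fin 1) w) =
      fromBlocks (Fᵀ * F) 0 0 1 := by
  rw [transpose_fromCols, fromRows_mul_fromCols]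
  have hw' : ∑ i, w i * w i = 1 := by
    rw [vecNorm, Real.sqrt_eq_one] at hw
    simpa [sq] using hw
  congr 1
  · ext i j
    simpa [mul_apply, mulVec, dotProduct] using congrFun hFw i
  · ext i j
    simpa [mul_apply, mulVec, dotProduct, mul_comm] using congrFun hFw j
  · ext i j
    simp [mul_apply, hw', one_apply, Subsingleton.elim i j]

theorem det_toLp_col_fromCols (F : Matrix (Fin (d + 1)) (Fin d) ℝ) (w : Fin (d + 1) → ℝ) :
    ((EuclideanSpace.basisFun (Fin (d + 1)) ℝ).reindex finSumFinEquiv.symm).toBasis.det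
      (fun j ↦ WithLp.toLp 2 ((fromCols F (replicateCol (Fin 1) w)).col j)) =
      (juxtCol F w).det := by
  rw [juxtCol_eq_submatrix, Module.Basis.det_apply, ← det_submatrix_equiv_self finSumFinEquiv.symm]
  congr 1
  ext i j
  simp [Module.Basis.toMatrix_apply]

theorem det_juxtCol_mul (F : Matrix (Fin (d + 1)) (Fin d) ℝ) (w : Fin (d + 1) → ℝ)
    (N : Matrix (Fin d) (Fin d) ℝ) : (juxtCol (F * N) w).det = (juxtCol F w).det * N.det := by
  have hblock : fromCols (F * N) (replicateCol (Fin 1) w) =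
      fromCols F (replicateCol (Fin 1) w) *
        (fromBlocks N 0 0 1 : Matrix (Fin d ⊕ Fin 1) (Fin d ⊕ Fin 1) ℝ) := by
    simp [fromCols_mul_fromBlocks]
  rw [juxtCol_eq_submatrix, juxtCol_eq_submatrix, hblock,
    ← submatrix_mul_equiv _ _ _ finSumFinEquiv.symm, det_mul, det_submatrix_equiv_self]
  simp

end Columns

theorem contDiffOn_one_sub_smul {V ι : Type*} [NormedAddCommGroup V] [NormedSpace ℝ V]
    [DecidableEq ι] {S : V → Matrix ι ι ℝ} {Ω : Set V} {n : WithTop ℕ∞}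
    (hS : ∀ i j, ContDiffOn ℝ n (fun x ↦ S x i j) Ω) (i j : ι) :
    ContDiffOn ℝ n (fun p : V × ℝ ↦ (1 - p.2 • S p.1) i j) (Prod.fst ⁻¹' Ω) := by
  simp only [Matrix.sub_apply, Matrix.smul_apply, smul_eq_mul]
  exact contDiffOn_const.sub (contDiffOn_snd.mul ((hS i j).comp contDiffOn_fst fun _ h ↦ h))

section TubularMetric

variable {V ι : Type*} [Fintype ι] [DecidableEq ι] {g S : V → Matrix ι ι ℝ}

/-- The metric `(1 - t S)ᵀ g (1 - t S) + dt²` which `normalExtension f v` induces on `V × ℝ` when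
`f` has first fundamental form `g` and shape operator `S` with respect to the unit normal `v`. -/
def tubularMetric (g S : V → Matrix ι ι ℝ) (p : V × ℝ) : Matrix (ι ⊕ Fin 1) (ι ⊕ Fin 1) ℝ :=
  fromBlocks ((1 - p.2 • S p.1)ᵀ * g p.1 * (1 - p.2 • S p.1)) 0 0 1

theorem posDef_tubularMetric {p : V × ℝ} (hg : (g p.1).PosDef)
    (hS : 0 < (1 - p.2 • S p.1).det) : (tubularMetric g S p).PosDef := by
  set N := 1 - p.2 • S p.1
  have hN : (Nᵀ * g p.1 * N).PosDef := by
    simpa using hg.conjTranspose_mul_mul_same (B := N)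
      (mulVec_injective_of_isUnit ((isUnit_iff_isUnit_det N).2 hS.ne'.isUnit))
  have := hN.isUnit.invertible
  have hsemi : (tubularMetric g S p).PosSemidef := by
    simpa [N, tubularMetric] using (hN.fromBlocks₁₁ (0 : Matrix ι (Fin 1) ℝ) 1).2
      (by simpa using PosSemidef.one)
  refine hsemi.posDef_iff_det_ne_zero.2 ?_
  simpa [N, tubularMetric] using hN.det_pos.ne'

variable [NormedAddCommGroup V] [NormedSpace ℝ V] {Ω : Set V} {n : WithTop ℕ∞}

theorem contDiffOn_tubularMetric (hg : ∀ i j, ContDiffOn ℝ n (fun x ↦ g x i j) Ω)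
    (hS : ∀ i j, ContDiffOn ℝ n (fun x ↦ S x i j) Ω) (i j : ι ⊕ Fin 1) :
    ContDiffOn ℝ n (fun p ↦ tubularMetric g S p i j) (Prod.fst ⁻¹' Ω) := by
  have hN := contDiffOn_one_sub_smul hS
  rcases i with i | i <;> rcases j with j | j
  · simp only [tubularMetric, fromBlocks_apply₁₁, mul_apply, transpose_apply]
    exact .sum fun k _ ↦ (ContDiffOn.sum fun l _ ↦ (hN l i).mul
      ((hg l k).comp contDiffOn_fst fun _ h ↦ h)).mul (hN k j)
  all_goals exact contDiffOn_const

theorem eventually_det_one_sub_smul_pos {x : V} (hΩ : Ω ∈ 𝓝 x)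
    (hS : ∀ i j, ContDiffOn ℝ n (fun x ↦ S x i j) Ω) :
    ∀ᶠ p : V × ℝ in 𝓝 (x, 0), 0 < (1 - p.2 • S p.1).det :=
  ((contDiffOn_matrix_det (contDiffOn_one_sub_smul hS)).continuousOn.continuousAt
    (continuous_fst.continuousAt hΩ)).eventually_const_lt (by simp)

end TubularMetric

section Euclidean

variable {d : ℕ}

/-- The coordinate frame of `ℝ^d × ℝ`. -/
noncomputable def coordFrame (d : ℕ) : Module.Basis (Fin d ⊕ Fin 1) ℝ ((Fin d → ℝ) × ℝ) :=
  (Pi.basisFun ℝ (Fin d)).prod (Module.Basis.singleton (Fin 1) ℝ)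

variable {Ω : Set (Fin d → ℝ)} {f v : (Fin d → ℝ) → Fin (d + 1) → ℝ}
  {g S : (Fin d → ℝ) → Matrix (Fin d) (Fin d) ℝ}

theorem fderiv_normalExtension_coordFrame (hΩ : IsOpen Ω) {p : (Fin d → ℝ) × ℝ} (hp : p.1 ∈ Ω)
    (hf : DifferentiableAt ℝ f p.1) (hv : DifferentiableAt ℝ v p.1)
    (hS : jacOn Ω v p.1 = -(jacOn Ω f p.1 * S p.1)) (j : Fin d ⊕ Fin 1) :
    fderiv ℝ (normalExtension (WithLp.toLp 2 ∘ f) (WithLp.toLp 2 ∘ v)) p (coordFrame d j) =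
      WithLp.toLp 2 ((fromCols (jacOn Ω f p.1 * (1 - p.2 • S p.1))
        (replicateCol (Fin 1) (v p.1))).col j) := by
  have hcol (h : (Fin d → ℝ) → Fin (d + 1) → ℝ) (j : Fin d) :
      fderiv ℝ h p.1 (Pi.single j 1) = (jacOn Ω h p.1).col j := by
    ext i; simp [jacOn, fderivWithin_of_isOpen hΩ hp]
  have hN : jacOn Ω f p.1 * (1 - p.2 • S p.1) = jacOn Ω f p.1 + p.2 • jacOn Ω v p.1 := by
    rw [hS, Matrix.mul_sub, Matrix.mul_one, Matrix.mul_smul, smul_neg, sub_eq_add_neg]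
  have htoLp {h : (Fin d → ℝ) → Fin (d + 1) → ℝ} (hh : DifferentiableAt ℝ h p.1) :=
    (PiLp.hasFDerivAt_toLp (𝕜 := ℝ) 2 (h p.1)).comp p.1 hh.hasFDerivAt
  rw [fderiv_normalExtension_apply (htoLp hf).differentiableAt (htoLp hv).differentiableAt,
    (htoLp hf).fderiv, (htoLp hv).fderiv, hN]
  rcases j with j | j
  · ext i
    simp [coordFrame, hcol]
  · ext i
    simp [coordFrame]

theorem ae_gram_normalExtension_eq_and_det_pos {Cf Cv : ℝ≥0} (hΩ : IsOpen Ω)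
    (hf : LipschitzOnWith Cf f Ω) (hv : LipschitzOnWith Cv v Ω)
    (hae : ∀ᵐ x ∂(volume.restrict Ω),
      (jacOn Ω f x)ᵀ * jacOn Ω f x = g x ∧
      (jacOn Ω f x)ᵀ *ᵥ v x = 0 ∧
      vecNorm (v x) = 1 ∧
      0 < (juxtCol (jacOn Ω f x) (v x)).det ∧
      jacOn Ω v x = -(jacOn Ω f x * S x)) :
    ∀ᵐ p ∂(volume : Measure (Fin d → ℝ)).prod (volume : Measure ℝ), p.1 ∈ Ω →
      0 < (1 - p.2 • S p.1).det →
      gram ℝ (fun j ↦ fderiv ℝ (normalExtension (WithLp.toLp 2 ∘ f) (WithLp.toLp 2 ∘ v)) p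
        (coordFrame d j)) = tubularMetric g S p ∧
      0 < ((EuclideanSpace.basisFun (Fin (d + 1)) ℝ).reindex finSumFinEquiv.symm).toBasis.det
        (fun j ↦ fderiv ℝ (normalExtension (WithLp.toLp 2 ∘ f) (WithLp.toLp 2 ∘ v)) p
          (coordFrame d j)) := by
  have hfst := Measure.quasiMeasurePreserving_fst (μ := (volume : Measure (Fin d → ℝ)))
    (ν := (volume : Measure ℝ))
  filter_upwards [hfst.ae ((ae_restrict_iff' hΩ.measurableSet).1 hae),
    hfst.ae hf.ae_differentiableWithinAt_of_mem, hfst.ae hv.ae_differentiableWithinAt_of_mem]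
    with p hp hfp hvp hpΩ hN
  obtain ⟨hFF, hFv, hv1, hdet, hS⟩ := hp hpΩ
  have hΩp := hΩ.mem_nhds hpΩ
  simp only [fderiv_normalExtension_coordFrame hΩ hpΩ ((hfp hpΩ).differentiableAt hΩp)
    ((hvp hpΩ).differentiableAt hΩp) hS,
    gram_toLp_col, det_toLp_col_fromCols, det_juxtCol_mul]
  refine ⟨?_, mul_pos hdet hN⟩
  rw [transpose_fromCols_mul_fromCols_of_unit_normal _ hv1, tubularMetric, ← hFF, transpose_mul]
  · simp only [Matrix.mul_assoc]
  · rw [transpose_mul, ← mulVec_mulVec, hFv, mulVec_zero]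

end Euclidean

/-- Regularity: a Lipschitz isometric immersion `f` of `(Ω, g)` into `ℝ^{d+1}`, with Lipschitz
positively oriented unit normal `v`, whose first fundamental form `g` and shape operator `S`
(defined via `dv = −df·S`) are smooth, is itself smooth (and so is its normal). -/
theorem regularity_of_lipschitz_isometric_immersion
    (d : ℕ) (hd : 1 ≤ d) (Ω : Set (Fin d → ℝ)) (hΩ : IsOpen Ω)
    (g S : (Fin d → ℝ) → Matrix (Fin d) (Fin d) ℝ)
    (hg : ∀ i j, ContDiffOn ℝ (⊤ : ℕ∞) (fun x => g x i j) Ω)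
    (hgpd : ∀ x ∈ Ω, (g x).PosDef)
    (hS : ∀ i j, ContDiffOn ℝ (⊤ : ℕ∞) (fun x => S x i j) Ω)
    (f v : (Fin d → ℝ) → Fin (d + 1) → ℝ) (Lf Lv : NNReal)
    (hf : LipschitzOnWith Lf f Ω) (hv : LipschitzOnWith Lv v Ω)
    (hae : ∀ᵐ x ∂(volume.restrict Ω),
      (jacOn Ω f x)ᵀ * jacOn Ω f x = g x ∧
      (jacOn Ω f x)ᵀ *ᵥ v x = 0 ∧
      vecNorm (v x) = 1 ∧
      0 < (juxtCol (jacOn Ω f x) (v x)).det ∧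
      jacOn Ω v x = -(jacOn Ω f x * S x)) :
    ContDiffOn ℝ (⊤ : ℕ∞) f Ω ∧ ContDiffOn ℝ (⊤ : ℕ∞) v Ω := by
  have hΦ {x} (hx : x ∈ Ω) :
      ContDiffAt ℝ ∞ (normalExtension (WithLp.toLp 2 ∘ f) (WithLp.toLp 2 ∘ v)) (x, 0) := by
    have hΩx : Ω ∈ 𝓝 x := hΩ.mem_nhds hx
    obtain ⟨C, U₀, hU₀, hC⟩ := exists_lipschitzOnWith_normalExtension
      ((PiLp.lipschitzWith_toLp 2 _).comp_lipschitzOnWith hf)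
      ((PiLp.lipschitzWith_toLp 2 _).comp_lipschitzOnWith hv) (p := (x, 0)) hΩx
    obtain ⟨U, hUsub, hU, hxU⟩ := _root_.mem_nhds_iff.1 (inter_mem hU₀ (inter_mem
      (continuous_fst.continuousAt hΩx) (eventually_det_one_sub_smul_pos hΩx hS)))
    have hiso := ae_gram_normalExtension_eq_and_det_pos hΩ hf hv hae
    exact (contDiffOn_of_gram_eq _ (coordFrame d) hU (hC.mono fun p hp ↦ (hUsub hp).1)
      (fun i j ↦ (contDiffOn_tubularMetric hg hS i j).mono fun p hp ↦ (hUsub hp).2.1)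
      (fun p hp ↦ posDef_tubularMetric (hgpd _ (hUsub hp).2.1) (hUsub hp).2.2)
      (hiso.mono fun p h hp ↦ (h (hUsub hp).2.1 (hUsub hp).2.2).1)
      (hiso.mono fun p h hp ↦ (h (hUsub hp).2.1 (hUsub hp).2.2).2)).contDiffAt (hU.mem_nhds hxU)
  have hofLp := PiLp.contDiff_ofLp (𝕜 := ℝ) (n := ∞) (p := 2) (E := fun _ : Fin (d + 1) ↦ ℝ)
  exact ⟨fun x hx ↦ (hofLp.contDiffAt.comp x
      (contDiffAt_of_contDiffAt_normalExtension (hΦ hx))).contDiffWithinAt,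
    fun x hx ↦ (hofLp.contDiffAt.comp x
      (contDiffAt_normal_of_contDiffAt_normalExtension (hΦ hx))).contDiffWithinAt⟩
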